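/- arXiv:1702.06479 — 3 statements merged into one kernel-verified Lean document; each statement's English description precedes it below -/
import Mathlib

section
/- Assume ε > 0 and that h is Lipschitz continuous, convex, and strictly increasing with h(0) = 0. Then there exist β ∈ (0,b] and a C² function f : [0,b] → ℝ such that: f''(x) + H(x, f(x), f'(x)) = 0 for all x ∈ [0,β]; f'(x) = r for all x ∈ [β,b]; f'(0) = 0; f'(x) < r for all x ∈ [0,β); and f is a (hence, by uniqueness, the unique) C² solution of HJB(ε). -/
open Set

/-- The Hamiltonian H(x,y,z) = (2/σ²)(m·z + ½σ²ε·z² − ϱ·y + h(x)). -/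
noncomputable def Hfun (σ ϱ m ε : ℝ) (h : ℝ → ℝ) (x y z : ℝ) : ℝ :=
  (2 / σ ^ 2) * (m * z + (1 / 2) * σ ^ 2 * ε * z ^ 2 - ϱ * y + h x)

/-- f (with first and second derivatives f', f'') is a C² solution of HJB(ε):
min{f'' + H(x,f,f'), f', r − f'} = 0 on (0,b), f'(0) = 0, f'(b) = r. -/
def IsHJBSolution (b σ ϱ r m ε : ℝ) (h f f' f'' : ℝ → ℝ) : Prop :=
  (∀ x ∈ Icc (0:ℝ) b, HasDerivWithinAt f (f' x) (Icc (0:ℝ) b) x) ∧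
  (∀ x ∈ Icc (0:ℝ) b, HasDerivWithinAt f' (f'' x) (Icc (0:ℝ) b) x) ∧
  ContinuousOn f'' (Icc (0:ℝ) b) ∧
  (∀ x ∈ Ioo (0:ℝ) b,
    min (min (f'' x + Hfun σ ϱ m ε h x (f x) (f' x)) (f' x)) (r - f' x) = 0) ∧
  f' 0 = 0 ∧ f' b = r

theorem ode_exists_aux {E : Type*} [NormedAddCommGroup E] [NormedSpace ℝ E] [CompleteSpace E]
    (v : ℝ → E → E) (b : ℝ) (hb : 0 < b) (K L : NNReal)
    (hK : ∀ t, LipschitzWith K (v t)) (hc : ∀ x, Continuous (fun t => v t x))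
    (hL : ∀ t x, ‖v t x‖ ≤ L) (x₀ : E) :
    ∃ u : ℝ → E, u 0 = x₀ ∧ ∀ t ∈ Icc (0:ℝ) b, HasDerivWithinAt u (v t (u t)) (Icc (0:ℝ) b) t := by
  have h0 : (0:ℝ) ∈ Icc (0:ℝ) b := ⟨le_rfl, hb.le⟩
  have hP : IsPicardLindelof v (⟨0, h0⟩ : Icc (0:ℝ) b) x₀ (L * ⟨b, hb.le⟩) 0 L K :=
    { lipschitzOnWith := fun t _ => (hK t).lipschitzOnWith
      continuousOn := fun x _ => (hc x).continuousOn
      norm_le := fun t _ x _ => hL t x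
      mul_max_le := by
        simp only [sub_zero, sub_self, NNReal.coe_zero, max_eq_left hb.le]
        exact le_rfl }
  obtain ⟨u, hu, hu'⟩ := hP.exists_eq_forall_mem_Icc_hasDerivWithinAt₀
  exact ⟨u, hu, hu'⟩

/-- truncation to [0,r] -/
noncomputable def clipf (r z : ℝ) : ℝ := max 0 (min z r)

theorem clipf_nonneg (r z : ℝ) : 0 ≤ clipf r z := le_max_left _ _
theorem clipf_le {r : ℝ} (hr : 0 < r) (z : ℝ) : clipf r z ≤ r := max_le hr.le (min_le_right _ _)
theorem clipf_of_mem {r z : ℝ} (h0 : 0 ≤ z) (h1 : z ≤ r) : clipf r z = z := by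
  simp [clipf, h0, h1]
theorem clipf_of_nonpos {r z : ℝ} (h1 : z ≤ 0) : clipf r z = 0 := by
  simp [clipf, h1]
theorem clipf_lip (r z w : ℝ) : |clipf r z - clipf r w| ≤ |z - w| := by
  unfold clipf
  have h1 := abs_max_sub_max_le_abs (min z r) (min w r) 0
  rw [max_comm 0, max_comm 0 (min w r)]
  refine h1.trans ?_
  have := abs_min_sub_min_le_max z r w r
  simpa using this
theorem clipf_cont (r : ℝ) : Continuous (clipf r) := by unfold clipf; fun_prop

/-- truncated vector field -/
noncomputable def vfld (c ϱ r m ε M : ℝ) (hh : ℝ → ℝ) (t : ℝ) (p : ℝ × ℝ) : ℝ × ℝ :=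
  (clipf r p.2, c * (ϱ * clipf M p.1 - hh t - m * clipf r p.2) - ε * (clipf r p.2) ^ 2)

theorem vfld_lip (c ϱ r m ε M : ℝ) (hh : ℝ → ℝ) (hr : 0 < r) :
    ∃ K : NNReal, ∀ t, LipschitzWith K (vfld c ϱ r m ε M hh t) := by
  refine ⟨⟨1 + |c * ϱ| + |c * m| + |ε| * (2 * r), by positivity⟩, fun t => ?_⟩
  refine LipschitzWith.of_dist_le_mul fun p q => ?_
  have h1 : |p.1 - q.1| ≤ dist p q := by
    rw [Prod.dist_eq, Real.dist_eq]; exact le_max_left _ _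
  have h2 : |p.2 - q.2| ≤ dist p q := by
    rw [Prod.dist_eq, Real.dist_eq, Real.dist_eq]; exact le_max_right _ _
  have h3 := (clipf_lip M p.1 q.1).trans h1
  have h4 := (clipf_lip r p.2 q.2).trans h2
  have hd : 0 ≤ dist p q := dist_nonneg
  rw [Prod.dist_eq, Real.dist_eq, Real.dist_eq]
  simp only [vfld]
  have h5 : |clipf r p.2 + clipf r q.2| ≤ 2 * r := by
    rw [abs_of_nonneg (add_nonneg (clipf_nonneg _ _) (clipf_nonneg _ _))]
    linarith [clipf_le hr p.2, clipf_le hr q.2]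
  show _ ≤ (1 + |c * ϱ| + |c * m| + |ε| * (2 * r)) * dist p q
  generalize dist p q = D at *
  generalize clipf r p.2 = z at *
  generalize clipf r q.2 = w at *
  generalize clipf M p.1 = a at *
  generalize clipf M q.1 = d at *
  have e1 : |c * ϱ| * |a - d| ≤ |c * ϱ| * D := by gcongr
  have e2 : |c * m| * |z - w| ≤ |c * m| * D := by gcongr
  have e3 : |ε| * (|z + w| * |z - w|) ≤ |ε| * (2 * r * D) := by gcongr
  have p1 : 0 ≤ |c * ϱ| * D := by positivity
  have p2 : 0 ≤ |c * m| * D := by positivity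
  have p3 : 0 ≤ |ε| * (2 * r * D) := by positivity
  refine max_le (by linarith) ?_
  have : c * (ϱ * a - hh t - m * z) - ε * z ^ 2 - (c * (ϱ * d - hh t - m * w) - ε * w ^ 2)
      = c * ϱ * (a - d) - c * m * (z - w) - ε * ((z + w) * (z - w)) := by ring
  rw [this]
  calc _ ≤ |c * ϱ * (a - d)| + |c * m * (z - w)| + |ε * ((z + w) * (z - w))| :=
        (abs_sub _ _).trans (add_le_add_left (abs_sub _ _) _)
    _ ≤ _ := by
      rw [abs_mul (c * ϱ), abs_mul (c * m), abs_mul ε, abs_mul (z + w)]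
      linarith

theorem vfld_bdd (c ϱ r m ε M B : ℝ) (hh : ℝ → ℝ) (hr : 0 < r) (hM : 0 < M)
    (hB : ∀ t, |hh t| ≤ B) :
    ∃ L : NNReal, ∀ t p, ‖vfld c ϱ r m ε M hh t p‖ ≤ L := by
  have hB0 : 0 ≤ B := (abs_nonneg _).trans (hB 0)
  refine ⟨⟨r + |c| * (|ϱ| * M + B + |m| * r) + |ε| * r ^ 2, by positivity⟩, fun t p => ?_⟩
  show _ ≤ r + |c| * (|ϱ| * M + B + |m| * r) + |ε| * r ^ 2
  rw [Prod.norm_def, Real.norm_eq_abs, Real.norm_eq_abs]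
  simp only [vfld]
  have z0 := clipf_nonneg r p.2
  have z1 := clipf_le hr p.2
  have a0 := clipf_nonneg M p.1
  have a1 := clipf_le hM p.1
  generalize clipf r p.2 = z at *
  generalize clipf M p.1 = a at *
  have q1 : 0 ≤ |c| * (|ϱ| * M + B + |m| * r) := by positivity
  have q2 : 0 ≤ |ε| * r ^ 2 := by positivity
  refine max_le (by rw [abs_of_nonneg z0]; linarith) ?_
  have e1 : |ϱ * a - hh t - m * z| ≤ |ϱ| * M + B + |m| * r := by
    calc _ ≤ |ϱ * a| + |hh t| + |m * z| :=
          (abs_sub _ _).trans (add_le_add_left (abs_sub _ _) _)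
      _ ≤ _ := by
        rw [abs_mul, abs_mul, abs_of_nonneg z0, abs_of_nonneg a0]
        gcongr
        exact hB t
  calc _ ≤ |c * (ϱ * a - hh t - m * z)| + |ε * z ^ 2| := abs_sub _ _
    _ ≤ |c| * (|ϱ| * M + B + |m| * r) + |ε| * r ^ 2 := by
      rw [abs_mul, abs_mul, abs_of_nonneg (sq_nonneg z)]
      gcongr
    _ ≤ _ := by linarith

theorem mvt_aux {b x y : ℝ} {u u' : ℝ → ℝ}
    (hu : ∀ t ∈ Icc (0:ℝ) b, HasDerivWithinAt u (u' t) (Icc (0:ℝ) b) t)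
    (hx : 0 ≤ x) (hxy : x < y) (hy : y ≤ b) :
    ∃ ξ ∈ Ioo x y, u y - u x = u' ξ * (y - x) := by
  obtain ⟨ξ, hξ, h⟩ := exists_hasDerivAt_eq_slope u u' hxy
    (fun t ht => ((hu t ⟨hx.trans ht.1, ht.2.trans hy⟩).continuousWithinAt).mono
      (Icc_subset_Icc hx hy))
    (fun t ht => (hu t ⟨hx.trans ht.1.le, ht.2.le.trans hy⟩).hasDerivAt
      (Icc_mem_nhds (hx.trans_lt ht.1) (ht.2.trans_le hy)))
  refine ⟨ξ, hξ, ?_⟩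
  rw [h]
  field_simp [(sub_pos.2 hxy).ne']

theorem shoot_aux (b c ϱ r m ε B : ℝ) (hb : 0 < b) (hc : 0 < c) (hϱ : 0 < ϱ) (hr : 0 < r)
    (hε : 0 < ε) (hh : ℝ → ℝ) (hcont : Continuous hh) (hpos : ∀ t, 0 ≤ hh t)
    (hB : ∀ t, hh t ≤ B) :
    ∃ f g : ℝ → ℝ,
      (∀ x ∈ Icc (0:ℝ) b, HasDerivWithinAt f (clipf r (g x)) (Icc (0:ℝ) b) x) ∧
      (∀ x ∈ Icc (0:ℝ) b, HasDerivWithinAt g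
        (c * (ϱ * f x - hh x - m * clipf r (g x)) - ε * (clipf r (g x)) ^ 2) (Icc (0:ℝ) b) x) ∧
      g 0 = 0 ∧ (∀ x ∈ Icc (0:ℝ) b, g x ≤ r) ∧ ∃ x ∈ Icc (0:ℝ) b, g x = r := by
  have hB0 : 0 ≤ B := (hpos 0).trans (hB 0)
  set Y : ℝ := ((r / b + ε * r ^ 2) / c + B + |m| * r) / ϱ with hY
  have hY0 : 0 < Y := by positivity
  set M : ℝ := Y + r * b with hM
  have hM0 : 0 < M := by positivity
  obtain ⟨K, hK⟩ := vfld_lip c ϱ r m ε M hh hr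
  obtain ⟨L, hL⟩ := vfld_bdd c ϱ r m ε M B hh hr hM0
    (fun t => by rw [abs_of_nonneg (hpos t)]; exact hB t)
  have hex := fun y : ℝ => ode_exists_aux (vfld c ϱ r m ε M hh) b hb K L hK
    (fun x => by unfold vfld; fun_prop) hL (y, 0)
  choose u hu0 hu using hex
  -- components
  have hf : ∀ y, ∀ x ∈ Icc (0:ℝ) b,
      HasDerivWithinAt (fun x => (u y x).1) (clipf r (u y x).2) (Icc (0:ℝ) b) x := by
    intro y x hx
    exact (hu y x hx).fst
  have hg0 : ∀ y, ∀ x ∈ Icc (0:ℝ) b,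
      HasDerivWithinAt (fun x => (u y x).2) (c * (ϱ * clipf M (u y x).1 - hh x
        - m * clipf r (u y x).2) - ε * (clipf r (u y x).2) ^ 2) (Icc (0:ℝ) b) x := by
    intro y x hx
    exact (hu y x hx).snd
  have hfb : ∀ y, ∀ x ∈ Icc (0:ℝ) b, y ≤ (u y x).1 ∧ (u y x).1 ≤ y + r * b := by
    intro y x hx
    have e0 : (u y 0).1 = y := by rw [hu0]
    rcases hx.1.eq_or_lt with h | h
    · subst h; rw [e0]; constructor
      · exact le_rfl
      · have : 0 < r * b := by positivity
        linarith
    · obtain ⟨ξ, hξ, he⟩ := mvt_aux (hf y) le_rfl h hx.2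
      rw [e0, sub_zero] at he
      have h1 := clipf_nonneg r (u y ξ).2
      have h2 := clipf_le hr (u y ξ).2
      have h3 : clipf r (u y ξ).2 * x ≤ r * b := by
        apply mul_le_mul h2 hx.2 hx.1 hr.le
      have h4 : 0 ≤ clipf r (u y ξ).2 * x := by positivity
      constructor <;> linarith
  have hg : ∀ y ∈ Icc 0 Y, ∀ x ∈ Icc (0:ℝ) b,
      HasDerivWithinAt (fun x => (u y x).2) (c * (ϱ * (u y x).1 - hh x
        - m * clipf r (u y x).2) - ε * (clipf r (u y x).2) ^ 2) (Icc (0:ℝ) b) x := by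
    intro y hy x hx
    have := hg0 y x hx
    rwa [clipf_of_mem (hy.1.trans (hfb y x hx).1)
      ((hfb y x hx).2.trans (by rw [hM]; linarith [hy.2]))] at this
  have hIci : ∀ t ∈ Ico (0:ℝ) b, ∀ {w : ℝ → ℝ × ℝ} {w' : ℝ × ℝ},
      HasDerivWithinAt w w' (Icc (0:ℝ) b) t → HasDerivWithinAt w w' (Ici t) t := by
    intro t ht w w' h
    exact h.mono_of_mem_nhdsWithin (Filter.mem_of_superset (Icc_mem_nhdsGE ht.2)
      (Icc_subset_Icc_left ht.1))
  -- y = 0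
  have hz : ∀ x ∈ Icc (0:ℝ) b, (u 0 x).2 ≤ 0 := by
    set w : ℝ → ℝ × ℝ := fun x => (0, - c * ∫ t in (0:ℝ)..x, hh t) with hw
    have hwneg : ∀ x, 0 ≤ x → - c * ∫ t in (0:ℝ)..x, hh t ≤ 0 := by
      intro x hx
      have := intervalIntegral.integral_nonneg (f := hh) (μ := MeasureTheory.volume) hx
        (fun t _ => hpos t)
      nlinarith
    have hwd : ∀ x, 0 ≤ x → HasDerivAt w (vfld c ϱ r m ε M hh x (w x)) x := by
      intro x hx
      have h1 : HasDerivAt (fun x => ∫ t in (0:ℝ)..x, hh t) (hh x) x :=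
        hcont.integral_hasStrictDerivAt 0 x |>.hasDerivAt
      have h2 := (hasDerivAt_const x (0:ℝ)).prodMk (h1.const_mul (-c))
      convert h2 using 1
      simp only [vfld, hw]
      rw [clipf_of_nonpos (hwneg x hx), clipf_of_nonpos le_rfl]
      ext <;> simp
    have := dist_le_of_trajectories_ODE (δ := 0) hK
      (fun x hx => (hu 0 x hx).continuousWithinAt)
      (fun t ht => hIci t ht (hu 0 t ⟨ht.1, ht.2.le⟩))
      (fun x hx => (hwd x hx.1).continuousAt.continuousWithinAt)
      (fun t ht => (hwd t ht.1).hasDerivWithinAt)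
      (by rw [hu0]; simp [hw])
    intro x hx
    have h1 := this x hx
    rw [zero_mul] at h1
    have h2 := dist_le_zero.1 h1
    rw [h2]
    exact hwneg x hx.1
  -- continuity in y
  set C : ℝ := Real.exp (K * b) with hC
  have hC0 : 0 < C := Real.exp_pos _
  have hdep : ∀ y y', ∀ x ∈ Icc (0:ℝ) b, |(u y x).2 - (u y' x).2| ≤ |y - y'| * C := by
    intro y y' x hx
    have := dist_le_of_trajectories_ODE (δ := |y - y'|) hK
      (fun x hx => (hu y x hx).continuousWithinAt)
      (fun t ht => hIci t ht (hu y t ⟨ht.1, ht.2.le⟩))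
      (fun x hx => (hu y' x hx).continuousWithinAt)
      (fun t ht => hIci t ht (hu y' t ⟨ht.1, ht.2.le⟩))
      (by rw [hu0, hu0, Prod.dist_eq]; simp [Real.dist_eq]) x hx
    rw [Prod.dist_eq, Real.dist_eq, Real.dist_eq] at this
    refine (le_max_right _ _).trans (this.trans ?_)
    rw [sub_zero, hC]
    gcongr
    exact hx.2
  set A : Set ℝ := {y | y ∈ Icc 0 Y ∧ ∃ x ∈ Icc (0:ℝ) b, r ≤ (u y x).2} with hA
  have hYA : Y ∈ A := by
    refine ⟨⟨hY0.le, le_rfl⟩, b, ⟨hb.le, le_rfl⟩, ?_⟩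
    obtain ⟨ξ, hξ, he⟩ := mvt_aux (hg Y ⟨hY0.le, le_rfl⟩) le_rfl hb le_rfl
    have e0 : (u Y 0).2 = 0 := by rw [hu0]
    simp only [e0, sub_zero] at he
    rw [he]
    have hξ' : ξ ∈ Icc 0 b := ⟨hξ.1.le, hξ.2.le⟩
    have h1 := clipf_nonneg r (u Y ξ).2
    have h2 := clipf_le hr (u Y ξ).2
    have h3 := (hfb Y ξ hξ').1
    have h4 := hB ξ
    generalize clipf r (u Y ξ).2 = z at *
    have h5 : m * z ≤ |m| * r := by
      calc m * z ≤ |m| * z := by gcongr; exact le_abs_self m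
        _ ≤ _ := by gcongr
    have h6 : ε * z ^ 2 ≤ ε * r ^ 2 := by gcongr
    have h7 : ϱ * Y = (r / b + ε * r ^ 2) / c + B + |m| * r := by
      rw [hY]; field_simp
    have h8 : ϱ * Y ≤ ϱ * (u Y ξ).1 := by gcongr
    have h9 : (r / b + ε * r ^ 2) / c ≤ ϱ * (u Y ξ).1 - hh ξ - m * z := by linarith
    have h10 : r / b + ε * r ^ 2 ≤ c * (ϱ * (u Y ξ).1 - hh ξ - m * z) := by
      rwa [div_le_iff₀' hc] at h9
    have h11 : r / b ≤ c * (ϱ * (u Y ξ).1 - hh ξ - m * z) - ε * z ^ 2 := by linarith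
    rwa [div_le_iff₀ hb] at h11
  have hAbdd : BddBelow A := ⟨0, fun y hy => hy.1.1⟩
  set ys := sInf A with hys
  have hys0 : 0 ≤ ys := le_csInf ⟨Y, hYA⟩ fun y hy => hy.1.1
  have hysY : ys ≤ Y := csInf_le hAbdd hYA
  have hle : ∀ x ∈ Icc (0:ℝ) b, (u ys x).2 ≤ r := by
    intro x hx
    by_contra! hlt
    rcases hys0.eq_or_lt with h | h
    · rw [← h] at hlt
      linarith [hz x hx]
    · set η := min ys (((u ys x).2 - r) / C) with hη
      have hη0 : 0 < η := lt_min h (div_pos (by linarith) hC0)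
      have h1 : η ≤ ys := min_le_left _ _
      have h2 : η * C ≤ (u ys x).2 - r := by
        rw [← le_div_iff₀ hC0]; exact min_le_right _ _
      have h3 := hdep ys (ys - η) x hx
      rw [show ys - (ys - η) = η by ring, abs_of_pos hη0] at h3
      have h4 : ys - η ∈ A := ⟨⟨by linarith, by linarith⟩, x, hx, by
        linarith [le_abs_self ((u ys x).2 - (u (ys - η) x).2)]⟩
      linarith [csInf_le hAbdd h4]
  refine ⟨fun x => (u ys x).1, fun x => (u ys x).2, hf ys, hg ys ⟨hys0, hysY⟩,
    by simp [hu0], hle, ?_⟩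
  obtain ⟨x, hx, hxm⟩ := isCompact_Icc.exists_isMaxOn (⟨0, le_rfl, hb.le⟩ : (Icc (0:ℝ) b).Nonempty)
    (fun x hx => (hg ys ⟨hys0, hysY⟩ x hx).continuousWithinAt)
  refine ⟨x, hx, le_antisymm (hle x hx) ?_⟩
  by_contra! hlt
  have hη : 0 < (r - (u ys x).2) / C := div_pos (by simpa using hlt) hC0
  obtain ⟨y, hyA, hy⟩ := exists_lt_of_csInf_lt ⟨Y, hYA⟩
    (show sInf A < ys + (r - (u ys x).2) / C by linarith)
  obtain ⟨hy0, x', hx', hrx⟩ := hyA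
  have h1 := hdep y ys x' hx'
  have h2 : ys ≤ y := csInf_le hAbdd ⟨hy0, x', hx', hrx⟩
  rw [abs_of_nonneg (by linarith : 0 ≤ y - ys)] at h1
  have h3 : (y - ys) * C < r - (u ys x).2 := by
    rw [← lt_div_iff₀ hC0]; linarith
  have h4 : (u ys x').2 ≤ (u ys x).2 := hxm hx'
  linarith [le_abs_self ((u y x').2 - (u ys x').2)]

theorem nonneg_aux (b c ϱ r m ε β : ℝ) (hc : 0 < c) (hr : 0 < r)
    (hh f g : ℝ → ℝ) (hmono : StrictMonoOn hh (Icc (0:ℝ) b))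
    (hf : ∀ x ∈ Icc (0:ℝ) b, HasDerivWithinAt f (clipf r (g x)) (Icc (0:ℝ) b) x)
    (hg : ∀ x ∈ Icc (0:ℝ) b, HasDerivWithinAt g
        (c * (ϱ * f x - hh x - m * clipf r (g x)) - ε * (clipf r (g x)) ^ 2) (Icc (0:ℝ) b) x)
    (hg0 : g 0 = 0) (hβ0 : 0 ≤ β) (hβb : β ≤ b) (hgβ : g β = r) :
    ∀ x ∈ Icc (0:ℝ) β, 0 ≤ g x := by
  have hsub : Icc (0:ℝ) β ⊆ Icc (0:ℝ) b := Icc_subset_Icc_right hβb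
  have hgc : ContinuousOn g (Icc (0:ℝ) β) :=
    fun x hx => ((hg x (hsub hx)).continuousWithinAt).mono hsub
  obtain ⟨x1, hx1, hmin⟩ := isCompact_Icc.exists_isMinOn
    (⟨0, le_rfl, hβ0⟩ : (Icc (0:ℝ) β).Nonempty) hgc
  suffices 0 ≤ g x1 from fun x hx => this.trans (hmin hx)
  by_contra! hneg
  have h0 : 0 < x1 := lt_of_le_of_ne hx1.1 (by rintro rfl; linarith)
  have h1 : x1 < β := lt_of_le_of_ne hx1.2 (by rintro rfl; linarith)
  have hd := (hg x1 (hsub hx1)).hasDerivAt (Icc_mem_nhds h0 (h1.trans_le hβb))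
  have hloc : IsLocalMin g x1 := by
    filter_upwards [Icc_mem_nhds h0 h1] with x hx using hmin hx
  have hz := hloc.hasDerivAt_eq_zero hd
  rw [clipf_of_nonpos hneg.le] at hz
  have hz' : ϱ * f x1 - hh x1 = 0 := by
    have : c * (ϱ * f x1 - hh x1) = 0 := by linarith
    exact (mul_eq_zero.1 this).resolve_left hc.ne'
  have hev : ∀ᶠ x in nhds x1, g x < 0 := hd.continuousAt.eventually (gt_mem_nhds hneg)
  obtain ⟨δ, hδ, hev⟩ := Metric.eventually_nhds_iff.1 hev
  set x2 := min β (x1 + δ / 2) with hx2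
  have h12 : x1 < x2 := lt_min h1 (by linarith)
  have h2β : x2 ≤ β := min_le_left _ _
  have hne : ∀ x ∈ Icc x1 x2, g x < 0 := by
    intro x hx
    apply hev
    rw [Real.dist_eq, abs_of_nonneg (by linarith [hx.1])]
    have := min_le_right β (x1 + δ / 2)
    linarith [hx.2]
  obtain ⟨ξ, hξ, he⟩ := mvt_aux hg h0.le h12 (h2β.trans hβb)
  obtain ⟨ζ, hζ, he'⟩ := mvt_aux hf h0.le hξ.1 (hξ.2.le.trans (h2β.trans hβb))
  rw [clipf_of_nonpos (hne ζ ⟨hζ.1.le, hζ.2.le.trans hξ.2.le⟩).le, zero_mul] at he'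
  rw [clipf_of_nonpos (hne ξ ⟨hξ.1.le, hξ.2.le⟩).le] at he
  have hm2 : g x1 ≤ g x2 := hmin ⟨h0.le.trans h12.le, h2β⟩
  have hhl : hh x1 < hh ξ := hmono (hsub hx1)
    ⟨h0.le.trans hξ.1.le, hξ.2.le.trans (h2β.trans hβb)⟩ hξ.1
  have hff : f ξ = f x1 := by linarith
  rw [hff] at he
  have : (c * (ϱ * f x1 - hh ξ - m * 0) - ε * 0 ^ 2) * (x2 - x1) < 0 := by
    apply mul_neg_of_neg_of_pos _ (by linarith)
    have : c * (ϱ * f x1 - hh ξ) < 0 := mul_neg_of_pos_of_neg hc (by linarith)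
    linarith
  linarith

theorem tang_aux (b c ϱ r m ε β : ℝ) (hc : 0 < c) (hϱ : 0 < ϱ) (hr : 0 < r) (hε : 0 < ε)
    (hh f g : ℝ → ℝ) (hconv : ConvexOn ℝ (Icc (0:ℝ) b) hh)
    (hf : ∀ x ∈ Icc (0:ℝ) b, HasDerivWithinAt f (clipf r (g x)) (Icc (0:ℝ) b) x)
    (hg : ∀ x ∈ Icc (0:ℝ) b, HasDerivWithinAt g
        (c * (ϱ * f x - hh x - m * clipf r (g x)) - ε * (clipf r (g x)) ^ 2) (Icc (0:ℝ) b) x)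
    (hβ0 : 0 < β) (hβb : β < b) (hgβ : g β = r)
    (hgr : ∀ x ∈ Icc (0:ℝ) b, g x ≤ r) (hgn : ∀ x ∈ Icc (0:ℝ) β, 0 ≤ g x) :
    c * (ϱ * f β - hh β - m * r) - ε * r ^ 2 = 0 ∧
    ∀ x ∈ Icc β b, ϱ * r * (x - β) ≤ hh x - hh β := by
  have hβm : β ∈ Icc (0:ℝ) b := ⟨hβ0.le, hβb.le⟩
  have hd := (hg β hβm).hasDerivAt (Icc_mem_nhds hβ0 hβb)
  have hloc : IsLocalMax g β := by
    filter_upwards [Icc_mem_nhds hβ0 hβb] with x hx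
    rw [hgβ]; exact hgr x hx
  have hz := hloc.hasDerivAt_eq_zero hd
  rw [hz] at hd
  rw [hgβ, clipf_of_mem hr.le le_rfl] at hz
  refine ⟨hz, fun x1 hx1 => ?_⟩
  by_contra! hlt
  have hβx : β < x1 := lt_of_le_of_ne hx1.1 (by rintro rfl; simp at hlt)
  set κ := ϱ * r - (hh x1 - hh β) / (x1 - β) with hκ
  have hκ0 : 0 < κ := by
    rw [hκ, sub_pos, div_lt_iff₀ (by linarith)]; exact hlt
  set N := c * ϱ * b + c * |m| + 2 * ε * r with hN
  have hb : 0 < b := hβ0.trans hβb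
  have hN0 : 0 < N := by positivity
  set η := c * κ / (2 * N) with hη
  have hη0 : 0 < η := by positivity
  have hηN : η * N = c * κ / 2 := by rw [hη]; field_simp
  have hev := (hasDerivAt_iff_isLittleO.1 hd).def hη0
  obtain ⟨δ, hδ, hev⟩ := Metric.eventually_nhds_iff.1 hev
  set x := max 0 (β - δ / 2) with hx
  have hxβ : x < β := max_lt hβ0 (by linarith)
  have hx0 : 0 ≤ x := le_max_left _ _
  have hbd : ∀ t ∈ Icc x β, r - g t ≤ η * (β - t) := by
    intro t ht
    have h1 := le_max_right 0 (β - δ / 2)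
    have := @hev t (by
      rw [Real.dist_eq, abs_of_nonpos (by linarith [ht.2])]
      linarith [ht.1])
    simp only [smul_zero, sub_zero, Real.norm_eq_abs] at this
    rw [abs_of_nonpos (by linarith [ht.2] : t - β ≤ 0), hgβ] at this
    linarith [neg_abs_le (g t - r)]
  obtain ⟨ξ, hξ, he⟩ := mvt_aux hg hx0 hxβ hβb.le
  have hξ0 : 0 < ξ := hx0.trans_lt hξ.1
  obtain ⟨ζ, hζ, he'⟩ := mvt_aux hf hξ0.le hξ.2 hβb.le
  have hξm : ξ ∈ Icc (0:ℝ) b := ⟨hξ0.le, hξ.2.le.trans hβb.le⟩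
  have hζm : ζ ∈ Icc (0:ℝ) b := ⟨hξ0.le.trans hζ.1.le, hζ.2.le.trans hβb.le⟩
  have gξ0 := hgn ξ ⟨hξ0.le, hξ.2.le⟩
  have gζ0 := hgn ζ ⟨hζm.1, hζ.2.le⟩
  have gξ1 := hgr ξ hξm
  have gζ1 := hgr ζ hζm
  rw [clipf_of_mem gζ0 gζ1] at he'
  rw [clipf_of_mem gξ0 gξ1] at he
  have dξ := hbd ξ ⟨hξ.1.le, hξ.2.le⟩
  have dζ := hbd ζ ⟨hξ.1.le.trans hζ.1.le, hζ.2.le⟩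
  have hs := hconv.slope_mono_adjacent hξm ⟨hβm.1.trans hx1.1, hx1.2⟩ hξ.2 hβx
  have hs' : hh β - hh ξ ≤ (ϱ * r - κ) * (β - ξ) := by
    rw [div_le_iff₀ (by linarith [hξ.2])] at hs
    have : ϱ * r - κ = (hh x1 - hh β) / (x1 - β) := by rw [hκ]; ring
    rw [this]; exact hs
  have hgx := hgr x ⟨hx0, hxβ.le.trans hβb.le⟩
  set s := β - ξ with hsdef
  have hs0 : 0 < s := by rw [hsdef]; linarith [hξ.2]
  have hsb : s ≤ b := by rw [hsdef]; linarith
  have t1 : ϱ * (r - g ζ) * s ≤ ϱ * (η * b) * s := by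
    have : r - g ζ ≤ η * b := dζ.trans (by
      have : β - ζ ≤ b := by linarith [hζm.1]
      gcongr)
    gcongr
  have t2 : m * (r - g ξ) ≤ |m| * (η * s) := by
    calc m * (r - g ξ) ≤ |m| * (r - g ξ) :=
          mul_le_mul_of_nonneg_right (le_abs_self m) (by linarith)
      _ ≤ _ := by gcongr
  have t3 : ε * ((r - g ξ) * (r + g ξ)) ≤ ε * ((η * s) * (2 * r)) := by
    have : r + g ξ ≤ 2 * r := by linarith
    have h3 : 0 ≤ r + g ξ := by linarith
    gcongr
  have key : c * (ϱ * f ξ - hh ξ - m * g ξ) - ε * g ξ ^ 2 < 0 := by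
    have e1 : c * (ϱ * f ξ - hh ξ - m * g ξ) - ε * g ξ ^ 2
        = c * (-ϱ * r * s + ϱ * (r - g ζ) * s + (hh β - hh ξ) + m * (r - g ξ))
          + ε * ((r - g ξ) * (r + g ξ)) := by
      linear_combination hz - c * ϱ * he'
    rw [e1]
    have e2 : c * (-ϱ * r * s + ϱ * (r - g ζ) * s + (hh β - hh ξ) + m * (r - g ξ)) ≤
        c * (-ϱ * r * s + ϱ * (η * b) * s + (ϱ * r - κ) * s + |m| * (η * s)) := by
      gcongr
    have e3 : c * (-ϱ * r * s + ϱ * (η * b) * s + (ϱ * r - κ) * s + |m| * (η * s))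
        + ε * ((η * s) * (2 * r)) = (η * N - c * κ) * s := by rw [hN]; ring
    have e4 : (η * N - c * κ) * s < 0 := by
      rw [hηN]
      apply mul_neg_of_neg_of_pos _ hs0
      have : 0 < c * κ := by positivity
      linarith
    linarith
  have : (c * (ϱ * f ξ - hh ξ - m * g ξ) - ε * g ξ ^ 2) * (β - x) < 0 :=
    mul_neg_of_neg_of_pos key (by linarith)
  linarith

theorem glue_aux {b β x d : ℝ} {u v w : ℝ → ℝ} (hβ0 : 0 ≤ β) (hβb : β ≤ b)
    (h1 : x ∈ Icc 0 β → HasDerivWithinAt u d (Icc 0 β) x)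
    (h2 : x ∈ Icc β b → HasDerivWithinAt v d (Icc β b) x)
    (e1 : ∀ t ∈ Icc 0 β, w t = u t) (e2 : ∀ t ∈ Icc β b, w t = v t) :
    HasDerivWithinAt w d (Icc 0 b) x := by
  rw [← Icc_union_Icc_eq_Icc hβ0 hβb]
  apply HasDerivWithinAt.union
  · by_cases hx : x ∈ Icc 0 β
    · exact (h1 hx).congr e1 (e1 x hx)
    · exact HasFDerivWithinAt.of_notMem_closure (by rwa [isClosed_Icc.closure_eq])
  · by_cases hx : x ∈ Icc β b
    · exact (h2 hx).congr e2 (e2 x hx)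
    · exact HasFDerivWithinAt.of_notMem_closure (by rwa [isClosed_Icc.closure_eq])

/-- Assume ε > 0 and that h is Lipschitz continuous, convex, and
strictly increasing with h(0) = 0. Then there exist β ∈ (0,b] and a C² function
f : [0,b] → ℝ such that: f'' + H(x,f,f') = 0 on [0,β]; f' = r on [β,b]; f'(0) = 0;
f' < r on [0,β); and f is a C² solution of HJB(ε). -/
theorem stmt9 (b σ ϱ r m ε : ℝ) (hb : 0 < b) (hσ : 0 < σ) (hϱ : 0 < ϱ) (hr : 0 < r)
    (hε : 0 < ε) (h : ℝ → ℝ)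
    (hLip : ∃ K : NNReal, LipschitzOnWith K h (Icc (0:ℝ) b))
    (hconv : ConvexOn ℝ (Icc (0:ℝ) b) h)
    (hmono : StrictMonoOn h (Icc (0:ℝ) b)) (h0 : h 0 = 0) :
    ∃ β ∈ Ioc (0:ℝ) b, ∃ f f' f'' : ℝ → ℝ,
      (∀ x ∈ Icc (0:ℝ) β, f'' x + Hfun σ ϱ m ε h x (f x) (f' x) = 0) ∧
      (∀ x ∈ Icc β b, f' x = r) ∧
      f' 0 = 0 ∧
      (∀ x ∈ Ico (0:ℝ) β, f' x < r) ∧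
      IsHJBSolution b σ ϱ r m ε h f f' f'' := by
  obtain ⟨Kh, hKh⟩ := hLip
  set c : ℝ := 2 / σ ^ 2 with hcdef
  have hc : 0 < c := by positivity
  set hh : ℝ → ℝ := fun x => h (max 0 (min x b)) with hhdef
  have hpr : ∀ x : ℝ, max 0 (min x b) ∈ Icc (0:ℝ) b :=
    fun x => ⟨le_max_left _ _, max_le hb.le (min_le_right _ _)⟩
  have hheq : ∀ x ∈ Icc (0:ℝ) b, hh x = h x := by
    intro x hx
    simp [hhdef, hx.1, hx.2]
  have hhc : Continuous hh := hKh.continuousOn.comp_continuous (by fun_prop) hpr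
  have h0m : (0:ℝ) ∈ Icc (0:ℝ) b := ⟨le_rfl, hb.le⟩
  have hbm : b ∈ Icc (0:ℝ) b := ⟨hb.le, le_rfl⟩
  have hhpos : ∀ x, 0 ≤ hh x := fun x => by
    rw [← h0]; exact hmono.monotoneOn h0m (hpr x) (hpr x).1
  have hhB : ∀ x, hh x ≤ h b := fun x => hmono.monotoneOn (hpr x) hbm (hpr x).2
  have hhmono : StrictMonoOn hh (Icc (0:ℝ) b) := hmono.congr (fun x hx => (hheq x hx).symm)
  have hhconv : ConvexOn ℝ (Icc (0:ℝ) b) hh := hconv.congr (fun x hx => (hheq x hx).symm)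
  obtain ⟨f, g, hf, hg, hg0, hgr, xr, hxr, hgxr⟩ :=
    shoot_aux b c ϱ r m ε (h b) hb hc hϱ hr hε hh hhc hhpos hhB
  have hgc : ContinuousOn g (Icc (0:ℝ) b) := fun x hx => (hg x hx).continuousWithinAt
  have hfc : ContinuousOn f (Icc (0:ℝ) b) := fun x hx => (hf x hx).continuousWithinAt
  have hScl : IsCompact (Icc (0:ℝ) b ∩ g ⁻¹' {r}) :=
    isCompact_Icc.of_isClosed_subset
      (hgc.preimage_isClosed_of_isClosed isClosed_Icc isClosed_singleton) inter_subset_left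
  obtain ⟨β, ⟨hβm, hgβ⟩, hβl⟩ := hScl.exists_isLeast ⟨xr, hxr, hgxr⟩
  replace hgβ : g β = r := hgβ
  have hβ0 : 0 < β := lt_of_le_of_ne hβm.1 (by rintro rfl; linarith)
  have hgn := nonneg_aux b c ϱ r m ε β hc hr hh f g hhmono hf hg hg0 hβ0.le hβm.2 hgβ
  have hsub : Icc (0:ℝ) β ⊆ Icc (0:ℝ) b := Icc_subset_Icc_right hβm.2
  have hglt : ∀ x ∈ Ico (0:ℝ) β, g x < r := by
    intro x hx
    have hxm : x ∈ Icc (0:ℝ) b := hsub ⟨hx.1, hx.2.le⟩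
    refine lt_of_le_of_ne (hgr x hxm) fun he => ?_
    have : β ≤ x := hβl ⟨hxm, he⟩
    linarith [hx.2]
  set G : ℝ → ℝ := fun x => c * (ϱ * f x - hh x - m * g x) - ε * g x ^ 2 with hGdef
  have hGc : ContinuousOn G (Icc (0:ℝ) b) := by
    have := hhc.continuousOn (s := Icc (0:ℝ) b)
    fun_prop
  have hf1 : ∀ x ∈ Icc (0:ℝ) β, HasDerivWithinAt f (g x) (Icc (0:ℝ) β) x := by
    intro x hx
    have := (hf x (hsub hx)).mono hsub
    rwa [clipf_of_mem (hgn x hx) (hgr x (hsub hx))] at this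
  have hg1 : ∀ x ∈ Icc (0:ℝ) β, HasDerivWithinAt g (G x) (Icc (0:ℝ) β) x := by
    intro x hx
    have := (hg x (hsub hx)).mono hsub
    rwa [clipf_of_mem (hgn x hx) (hgr x (hsub hx))] at this
  have htan : β < b → G β = 0 ∧ ∀ x ∈ Icc β b, ϱ * r * (x - β) ≤ hh x - hh β := by
    intro hβb
    have := tang_aux b c ϱ r m ε β hc hϱ hr hε hh f g hhconv hf hg hβ0 hβb hgβ hgr hgn
    simpa only [hGdef, hgβ] using this
  have hode : ∀ x ∈ Icc (0:ℝ) β, G (min x β) + Hfun σ ϱ m ε h x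
      (f (min x β) + r * (x - min x β)) (g (min x β)) = 0 := by
    intro x hx
    rw [min_eq_left hx.2]
    simp only [hGdef, Hfun, hheq x (hsub hx), hcdef]
    field_simp
    ring
  have hmm : ∀ x ∈ Icc (0:ℝ) b, min x β ∈ Icc (0:ℝ) b :=
    fun x hx => ⟨le_min hx.1 hβ0.le, (min_le_left _ _).trans hx.2⟩
  refine ⟨β, ⟨hβ0, hβm.2⟩, fun x => f (min x β) + r * (x - min x β), fun x => g (min x β),
    fun x => G (min x β), hode, ?_, ?_, ?_, ?_, ?_, ?_, ?_, ?_, ?_⟩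
  · intro x hx
    simp only [min_eq_right hx.1, hgβ]
  · simp only [min_eq_left hβ0.le, hg0]
  · intro x hx
    simp only [min_eq_left hx.2.le]
    exact hglt x hx
  · intro x hx
    refine glue_aux (u := f) (v := fun x => f β + r * (x - β)) hβ0.le hβm.2 ?_ ?_ ?_ ?_
    · intro hx
      beta_reduce
      rw [min_eq_left hx.2]
      exact hf1 x hx
    · intro hx
      beta_reduce
      rw [min_eq_right hx.1, hgβ]
      have : HasDerivAt (fun x => f β + r * (x - β)) (r * 1) x :=
        (((hasDerivAt_id x).sub_const β).const_mul r).const_add (f β)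
      rw [mul_one] at this
      exact this.hasDerivWithinAt
    · intro t ht
      simp [min_eq_left ht.2]
    · intro t ht
      simp [min_eq_right ht.1]
  · intro x hx
    refine glue_aux (u := g) (v := fun x => r) hβ0.le hβm.2 ?_ ?_ ?_ ?_
    · intro hx
      beta_reduce
      rw [min_eq_left hx.2]
      exact hg1 x hx
    · intro hx
      beta_reduce
      rw [min_eq_right hx.1]
      rcases hβm.2.eq_or_lt with he | hl
      · rw [← he, Icc_self] 
        exact HasFDerivWithinAt.of_subsingleton subsingleton_singleton
      · rw [(htan hl).1]
        exact (hasDerivAt_const x r).hasDerivWithinAt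
    · intro t ht
      simp [min_eq_left ht.2]
    · intro t ht
      simp [min_eq_right ht.1, hgβ]
  · exact hGc.comp (by fun_prop) hmm
  · intro x hx
    rcases le_or_gt x β with hxβ | hxβ
    · beta_reduce
      rw [hode x ⟨hx.1.le, hxβ⟩, min_eq_left hxβ, min_eq_left (hgn x ⟨hx.1.le, hxβ⟩),
        min_eq_left (by linarith [hgr x ⟨hx.1.le, hx.2.le⟩])]
    · obtain ⟨hG, ht⟩ := htan (hxβ.trans hx.2)
      have ht := ht x ⟨hxβ.le, hx.2.le⟩
      have hx' : x ∈ Icc (0:ℝ) b := ⟨hx.1.le, hx.2.le⟩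
      simp only [min_eq_right hxβ.le, hgβ, sub_self]
      apply min_eq_right
      refine le_min ?_ hr.le
      rw [hG, zero_add]
      have e : Hfun σ ϱ m ε h x (f β + r * (x - β)) r
          = c * ((hh x - hh β) - ϱ * r * (x - β)) - G β := by
        simp only [hGdef, Hfun, ← hheq x hx', hgβ, hcdef]
        field_simp
        ring
      rw [e, hG, sub_zero]
      exact mul_nonneg hc.le (by linarith)
  · simp only [min_eq_left hβ0.le, hg0]
  · simp only [min_eq_right hβm.2, hgβ]
end

section
/- Let 0 < ε₂ < ε₁, and let f₁ and f₂ be C² solutions of HJB(ε₁) and HJB(ε₂), respectively. Then for every x ∈ [0,b], f₂(x) < f₁(x) ≤ f₂(x) + (ε₁·σ²·r²/(2·ε₂·ϱ))·(ε₁ − ε₂). In particular, for each fixed x the map ε ↦ f_ε(x) is strictly increasing and continuous on (0,∞). -/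
open Set

lemma tang_nonneg {u : ℝ → ℝ} {c p q a y : ℝ}
    (hd : HasDerivWithinAt u c (Icc p q) a) (ha : a ∈ Icc p q) (hy : y ∈ Icc p q)
    (hmin : ∀ x ∈ Icc p q, u a ≤ u x) : 0 ≤ (y - a) * c := by
  have h1 : IsLocalMinOn u (Icc p q) a := by
    have : IsMinOn u (Icc p q) a := fun x hx => hmin x hx
    exact this.localize
  have h2 := h1.hasFDerivWithinAt_nonneg (y := y - a) hd.hasFDerivWithinAt
    (sub_mem_posTangentConeAt_of_segment_subset
      ((convex_Icc p q).segment_subset ha hy))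
  simpa using h2

lemma second_nonneg {u u' : ℝ → ℝ} {c p q a : ℝ} (ha : a ∈ Ioo p q)
    (h1 : ∀ x ∈ Icc p q, HasDerivWithinAt u (u' x) (Icc p q) x)
    (h2 : HasDerivWithinAt u' c (Icc p q) a)
    (hmin : ∀ x ∈ Icc p q, u a ≤ u x) : u' a = 0 ∧ 0 ≤ c := by
  have ha' := Ioo_subset_Icc_self ha
  have hpq : p ≤ q := (ha.1.trans ha.2).le
  have e1 := tang_nonneg (h1 a ha') ha' (left_mem_Icc.2 hpq) hmin
  have e2 := tang_nonneg (h1 a ha') ha' (right_mem_Icc.2 hpq) hmin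
  have h0 : u' a = 0 := by
    apply le_antisymm
    · nlinarith [ha.1]
    · nlinarith [ha.2]
  refine ⟨h0, ?_⟩
  by_contra hc
  push Not at hc
  have hd : HasDerivAt u' c a := h2.hasDerivAt (Icc_mem_nhds ha.1 ha.2)
  have ht := (hasDerivAt_iff_tendsto_slope.1 hd).eventually_lt_const hc
  rw [eventually_nhdsWithin_iff, Metric.eventually_nhds_iff] at ht
  obtain ⟨δ, hδ, ht⟩ := ht
  obtain ⟨y, hy1, hy2⟩ : ∃ y, a < y ∧ y < min q (a + δ) :=
    exists_between (lt_min ha.2 (by linarith))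
  have hyq := hy2.trans_le (min_le_left _ _)
  have hyd := hy2.trans_le (min_le_right _ _)
  have hsub : Icc a y ⊆ Icc p q := Icc_subset_Icc ha.1.le hyq.le
  obtain ⟨z, hz, hzs⟩ := exists_hasDerivAt_eq_slope u u' hy1
    (fun x hx => ((h1 x (hsub hx)).continuousWithinAt).mono hsub)
    (fun x hx => (h1 x (hsub (Ioo_subset_Icc_self hx))).hasDerivAt
      (Icc_mem_nhds (ha.1.trans hx.1) (hx.2.trans hyq)))
  have hs := ht (y := z) (by rw [Real.dist_eq, abs_lt]; constructor <;> linarith [hz.1, hz.2])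
    (by simpa using hz.1.ne')
  rw [slope_def_field, h0, sub_zero] at hs
  have hz0 : u' z < 0 := by
    by_contra hh
    push Not at hh
    have := div_nonneg hh (sub_nonneg.2 hz.1.le)
    linarith
  have := hmin y (hsub (right_mem_Icc.2 hy1.le))
  have : 0 ≤ u' z := by
    rw [hzs]; exact div_nonneg (by linarith) (by linarith)
  linarith

lemma core {σ ϱ m ε p q : ℝ} (hσ : 0 < σ) (hϱ : 0 < ϱ) (hpq : p < q)
    {h f f' f'' φ φ' φ'' : ℝ → ℝ}
    (hf1 : ∀ x ∈ Icc p q, HasDerivWithinAt f (f' x) (Icc p q) x)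
    (hf2 : ∀ x ∈ Icc p q, HasDerivWithinAt f' (f'' x) (Icc p q) x)
    (hφ1 : ∀ x ∈ Icc p q, HasDerivWithinAt φ (φ' x) (Icc p q) x)
    (hφ2 : ∀ x ∈ Icc p q, HasDerivWithinAt φ' (φ'' x) (Icc p q) x)
    (hF : ∀ x ∈ Ioo p q, 0 ≤ φ'' x + Hfun σ ϱ m ε h x (φ x) (φ' x))
    (hz : ∀ x ∈ Ioo p q, f' x = φ' x → f'' x + Hfun σ ϱ m ε h x (f x) (f' x) = 0)
    (hp : f' p < φ' p ∨ φ p ≤ f p) (hq : φ' q < f' q ∨ φ q ≤ f q) :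
    ∀ x ∈ Icc p q, φ x ≤ f x := by
  have hu1 : ∀ x ∈ Icc p q, HasDerivWithinAt (fun x => f x - φ x) (f' x - φ' x) (Icc p q) x :=
    fun x hx => (hf1 x hx).sub (hφ1 x hx)
  have hu2 : ∀ x ∈ Icc p q, HasDerivWithinAt (fun x => f' x - φ' x) (f'' x - φ'' x) (Icc p q) x :=
    fun x hx => (hf2 x hx).sub (hφ2 x hx)
  obtain ⟨a, ha, hmin⟩ := isCompact_Icc.exists_isMinOn (nonempty_Icc.2 hpq.le)
    (fun x hx => (hu1 x hx).continuousWithinAt : ContinuousOn (fun x => f x - φ x) (Icc p q))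
  have hmin' : ∀ x ∈ Icc p q, f a - φ a ≤ f x - φ x := fun x hx => hmin hx
  suffices hs : φ a ≤ f a by
    intro x hx
    linarith [hmin' x hx]
  rcases eq_or_lt_of_le ha.1 with rfl | hpa
  · rcases hp with hp | hp
    · have := tang_nonneg (hu1 p ha) ha (right_mem_Icc.2 hpq.le) hmin'
      nlinarith
    · exact hp
  rcases eq_or_lt_of_le ha.2 with rfl | haq
  · rcases hq with hq | hq
    · have := tang_nonneg (hu1 a ha) ha (left_mem_Icc.2 hpq.le) hmin'
      nlinarith
    · exact hq
  have hI : a ∈ Ioo p q := ⟨hpa, haq⟩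
  obtain ⟨e1, e2⟩ := second_nonneg hI hu1 (hu2 a ha) hmin'
  have e3 := hz a hI (by linarith)
  have e4 := hF a hI
  have e5 : f' a = φ' a := by linarith
  by_contra hc
  push Not at hc
  unfold Hfun at e3 e4
  rw [e5] at e3
  have hk : 0 < 2 / σ ^ 2 := by positivity
  have : 0 < (2 / σ ^ 2) * (ϱ * (φ a - f a)) := by
    apply mul_pos hk (mul_pos hϱ (by linarith))
  nlinarith

lemma sol_bounds {b σ ϱ r m ε : ℝ} {h f f' f'' : ℝ → ℝ} (hr : 0 < r)
    (hf : IsHJBSolution b σ ϱ r m ε h f f' f'') :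
    (∀ x ∈ Icc 0 b, 0 ≤ f' x ∧ f' x ≤ r) ∧
    (∀ x ∈ Ioo 0 b, 0 ≤ f'' x + Hfun σ ϱ m ε h x (f x) (f' x)) ∧
    (∀ x ∈ Ioo 0 b, 0 < f' x → f' x < r →
      f'' x + Hfun σ ϱ m ε h x (f x) (f' x) = 0) := by
  obtain ⟨-, -, -, h4, h5, h6⟩ := hf
  have key : ∀ x ∈ Ioo 0 b, 0 ≤ f'' x + Hfun σ ϱ m ε h x (f x) (f' x) ∧ 0 ≤ f' x ∧ 0 ≤ r - f' x := by
    intro x hx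
    have := (h4 x hx).ge
    rw [le_min_iff, le_min_iff] at this
    exact ⟨this.1.1, this.1.2, this.2⟩
  refine ⟨?_, fun x hx => (key x hx).1, ?_⟩
  · intro x hx
    rcases eq_or_lt_of_le hx.1 with rfl | h0
    · rw [h5]; exact ⟨le_rfl, hr.le⟩
    rcases eq_or_lt_of_le hx.2 with rfl | hb
    · rw [h6]; exact ⟨hr.le, le_rfl⟩
    have := key x ⟨h0, hb⟩
    exact ⟨this.2.1, by linarith [this.2.2]⟩
  · intro x hx h1 h2
    have := h4 x hx
    rcases min_choice (min (f'' x + Hfun σ ϱ m ε h x (f x) (f' x)) (f' x)) (r - f' x) with e | e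
    · rw [e] at this
      rcases min_choice (f'' x + Hfun σ ϱ m ε h x (f x) (f' x)) (f' x) with e | e
      · rw [e] at this; exact this
      · rw [e] at this; linarith
    · rw [e] at this; linarith

lemma weak_comparison {b σ ϱ r m ε : ℝ} (hb : 0 < b) (hσ : 0 < σ) (hϱ : 0 < ϱ) (hr : 0 < r)
    (hε : 0 < ε) {h f f' f'' ψ ψ' ψ'' : ℝ → ℝ} (hh : ∀ x ∈ Icc 0 b, 0 ≤ h x)
    (hf : IsHJBSolution b σ ϱ r m ε h f f' f'')
    (hψ1 : ∀ x ∈ Icc 0 b, HasDerivWithinAt ψ (ψ' x) (Icc 0 b) x)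
    (hψ2 : ∀ x ∈ Icc 0 b, HasDerivWithinAt ψ' (ψ'' x) (Icc 0 b) x)
    (hψb : ∀ x ∈ Icc 0 b, 0 ≤ ψ' x ∧ ψ' x ≤ r)
    (hF : ∀ x ∈ Ioo 0 b, 0 ≤ ψ'' x + Hfun σ ϱ m ε h x (ψ x) (ψ' x)) :
    ∀ x ∈ Icc 0 b, ψ x ≤ f x := by
  obtain ⟨hfb, hfF, hfz⟩ := sol_bounds hr hf
  obtain ⟨hf1, hf2, -, -, h5, h6⟩ := hf
  set C : ℝ := (|m| * r + ϱ * r * b + σ ^ 2 * ε * r ^ 2) / ϱ with hC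
  have hCe : ϱ * C = |m| * r + ϱ * r * b + σ ^ 2 * ε * r ^ 2 := by
    rw [hC]; field_simp
  have main : ∀ l ∈ Ioo (0:ℝ) 1, ∀ x ∈ Icc 0 b, (1 - l) * ψ x + l * (r / 2 * x - C) ≤ f x := by
    intro l hl
    refine core (φ := fun x => (1 - l) * ψ x + l * (r / 2 * x - C))
      (φ' := fun x => (1 - l) * ψ' x + l * (r / 2)) (φ'' := fun x => (1 - l) * ψ'' x)
      (m := m) (ε := ε) (h := h) hσ hϱ hb hf1 hf2 ?_ ?_ ?_ ?_ ?_ ?_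
    · intro x hx
      have hlin : HasDerivWithinAt (fun x : ℝ => r / 2 * x - C) (r / 2) (Icc 0 b) x := by
        simpa using (((hasDerivAt_id x).const_mul (r / 2)).sub_const C).hasDerivWithinAt
      exact ((hψ1 x hx).const_mul (1 - l)).add (hlin.const_mul l)
    · intro x hx
      exact ((hψ2 x hx).const_mul (1 - l)).add_const _
    · intro x hx
      have hx' := Ioo_subset_Icc_self hx
      have e1 := hF x hx
      have hb1 := hψb x hx'
      have hh1 := hh x hx'
      unfold Hfun at e1 ⊢
      have hk : 0 < 2 / σ ^ 2 := by positivity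
      have hks : (2 / σ ^ 2) * σ ^ 2 = 2 := by field_simp
      have hl1 : 0 < 1 - l := by linarith [hl.2]
      have hp1 := mul_nonneg hl1.le e1
      have hrem : 0 ≤ m * (r / 2) - ϱ * (r / 2 * x) + ϱ * C + h x
          - (1 / 2) * σ ^ 2 * ε * ((1 - l) * (ψ' x - r / 2) ^ 2) := by
        rw [hCe]
        have a1 : -(|m| * r) ≤ m * (r / 2) := by
          have := neg_abs_le m
          nlinarith [abs_nonneg m]
        have a2 : ϱ * (r / 2 * x) ≤ ϱ * r * b := by
          have : r / 2 * x ≤ r * b := by nlinarith [hx.1, hx.2]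
          nlinarith
        have a3 : (1 - l) * (ψ' x - r / 2) ^ 2 ≤ r ^ 2 := by
          have : (ψ' x - r / 2) ^ 2 ≤ r ^ 2 := by nlinarith
          nlinarith [sq_nonneg (ψ' x - r / 2), hl.1]
        have hse : 0 < σ ^ 2 * ε := by positivity
        have a4 := mul_le_mul_of_nonneg_left a3 hse.le
        nlinarith [sq_nonneg r]
      have hfin := mul_nonneg (mul_nonneg hl.1.le hk.le)
        (add_nonneg hrem (by positivity : 0 ≤ (1/2) * σ^2 * ε * (r/2)^2))
      have : (1 - l) * ψ'' x + 2 / σ ^ 2 * (m * ((1 - l) * ψ' x + l * (r / 2)) +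
          1 / 2 * σ ^ 2 * ε * ((1 - l) * ψ' x + l * (r / 2)) ^ 2 -
          ϱ * ((1 - l) * ψ x + l * (r / 2 * x - C)) + h x) =
        (1 - l) * (ψ'' x + 2 / σ ^ 2 * (m * ψ' x + 1 / 2 * σ ^ 2 * ε * ψ' x ^ 2 - ϱ * ψ x + h x))
        + l * (2 / σ ^ 2) * ((m * (r / 2) - ϱ * (r / 2 * x) + ϱ * C + h x
          - (1 / 2) * σ ^ 2 * ε * ((1 - l) * (ψ' x - r / 2) ^ 2)) + (1/2) * σ^2 * ε * (r/2)^2) := by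
        ring
      rw [this]
      linarith
    · intro x hx hxe
      have hb1 := hψb x (Ioo_subset_Icc_self hx)
      apply hfz x hx
      · rw [hxe]; nlinarith [hl.1, hl.2]
      · rw [hxe]; nlinarith [hl.1, hl.2]
    · left
      have hb1 := hψb 0 (left_mem_Icc.2 hb.le)
      rw [h5]; nlinarith [hl.1, hl.2]
    · left
      have hb1 := hψb b (right_mem_Icc.2 hb.le)
      rw [h6]; nlinarith [hl.1, hl.2]
  intro x hx
  have ht : Filter.Tendsto (fun l : ℝ => (1 - l) * ψ x + l * (r / 2 * x - C))
      (nhdsWithin 0 (Ioi 0)) (nhds (ψ x)) := by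
    have hc : Continuous (fun l : ℝ => (1 - l) * ψ x + l * (r / 2 * x - C)) := by fun_prop
    have := hc.tendsto 0
    simp only [sub_zero, one_mul, zero_mul, add_zero] at this
    exact this.mono_left nhdsWithin_le_nhds
  refine le_of_tendsto ht ?_
  filter_upwards [Ioo_mem_nhdsGT (zero_lt_one' ℝ)] with l hl
  exact main l hl x hx

/-- Barrier `ψ + η (exp (α s (x - x0)) - 1)` is again a subsolution. -/
lemma barrier {σ ϱ r m ε η α s x0 x a0 a1 a2 : ℝ} {h : ℝ → ℝ} (hσ : 0 < σ) (hϱ : 0 < ϱ)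
    (hr : 0 < r) (hε : 0 < ε) (hη : 0 < η)
    (hα : α = 2 / σ ^ 2 * |m| + 2 * ε * r + 2 / σ ^ 2 * ϱ + 1) (hs : s = 1 ∨ s = -1)
    (h1 : 0 ≤ a1) (h1r : a1 ≤ r) (hF : 0 ≤ a2 + Hfun σ ϱ m ε h x a0 a1) :
    0 ≤ (a2 + η * (α * s) ^ 2 * Real.exp (α * s * (x - x0))) +
      Hfun σ ϱ m ε h x (a0 + η * (Real.exp (α * s * (x - x0)) - 1))
        (a1 + η * (α * s) * Real.exp (α * s * (x - x0))) := by
  have hs2 : s ^ 2 = 1 := by rcases hs with rfl | rfl <;> norm_num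
  have hsa : |s| = 1 := by rcases hs with rfl | rfl <;> norm_num
  set E := Real.exp (α * s * (x - x0)) with hE
  have hE0 : 0 < E := Real.exp_pos _
  unfold Hfun at hF ⊢
  have hk : 0 < 2 / σ ^ 2 := by positivity
  set k := 2 / σ ^ 2 with hkdef
  have hks : k * σ ^ 2 = 2 := by rw [hkdef]; field_simp
  have hα1 : 1 ≤ α := by
    rw [hα]
    have : 0 ≤ k * |m| + 2 * ε * r + k * ϱ := by positivity
    linarith
  have e1 : -|m| ≤ m * s := by
    have := neg_abs_le (m * s)
    rwa [abs_mul, hsa, mul_one] at this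
  have e2 : -r ≤ a1 * s := by
    rcases hs with rfl | rfl <;> linarith
  have hbr : 0 ≤ α ^ 2 + k * α * (m * s) + 2 * ε * α * (a1 * s) - k * ϱ := by
    have b1 : -(k * α * |m|) ≤ k * α * (m * s) := by
      have := mul_le_mul_of_nonneg_left e1 (by positivity : 0 ≤ k * α)
      linarith
    have b2 : -(2 * ε * α * r) ≤ 2 * ε * α * (a1 * s) := by
      have := mul_le_mul_of_nonneg_left e2 (by positivity : 0 ≤ 2 * ε * α)
      linarith
    have b3 : k * ϱ ≤ k * ϱ * α := le_mul_of_one_le_right (by positivity) hα1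
    have b4 : α ^ 2 = k * α * |m| + 2 * ε * α * r + k * ϱ * α + α := by
      rw [sq]; nth_rewrite 1 [hα]; ring
    linarith
  have key : (a2 + η * (α * s) ^ 2 * E) +
      k * (m * (a1 + η * (α * s) * E) + 1 / 2 * σ ^ 2 * ε * (a1 + η * (α * s) * E) ^ 2
        - ϱ * (a0 + η * (E - 1)) + h x)
      = (a2 + k * (m * a1 + 1 / 2 * σ ^ 2 * ε * a1 ^ 2 - ϱ * a0 + h x))
        + η * E * (α ^ 2 * s ^ 2 + k * α * (m * s) + (k * σ ^ 2) * ε * α * (a1 * s) - k * ϱ)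
        + k * (1 / 2 * σ ^ 2 * ε * (η * (α * s) * E) ^ 2) + k * ϱ * η := by
    ring
  rw [key, hs2, hks, mul_one]
  have t1 := mul_nonneg (mul_pos hη hE0).le hbr
  have t2 : 0 ≤ k * (1 / 2 * σ ^ 2 * ε * (η * (α * s) * E) ^ 2) := by positivity
  have t3 : 0 ≤ k * ϱ * η := by positivity
  linarith

/-- Hopf-type lemma on `[p,q]`; `s = 1` means touching at `p`, `s = -1` touching at `q`. -/
lemma hopf {σ ϱ r m ε s p q x0 x1 : ℝ} (hσ : 0 < σ) (hϱ : 0 < ϱ) (hr : 0 < r)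
    (hε : 0 < ε) (hpq : p < q)
    (hs : (s = 1 ∧ x0 = p ∧ x1 = q) ∨ (s = -1 ∧ x0 = q ∧ x1 = p))
    {h f f' f'' ψ ψ' ψ'' : ℝ → ℝ}
    (hf1 : ∀ x ∈ Icc p q, HasDerivWithinAt f (f' x) (Icc p q) x)
    (hf2 : ∀ x ∈ Icc p q, HasDerivWithinAt f' (f'' x) (Icc p q) x)
    (hψ1 : ∀ x ∈ Icc p q, HasDerivWithinAt ψ (ψ' x) (Icc p q) x)
    (hψ2 : ∀ x ∈ Icc p q, HasDerivWithinAt ψ' (ψ'' x) (Icc p q) x)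
    (hψb : ∀ x ∈ Icc p q, 0 ≤ ψ' x ∧ ψ' x ≤ r)
    (hF : ∀ x ∈ Ioo p q, 0 ≤ ψ'' x + Hfun σ ϱ m ε h x (ψ x) (ψ' x))
    (hz : ∀ x ∈ Ioo p q, 0 < s * (f' x - ψ' x) →
      f'' x + Hfun σ ϱ m ε h x (f x) (f' x) = 0)
    (ht0 : f x0 = ψ x0) (ht1 : f' x0 = ψ' x0) : f x1 ≤ ψ x1 := by
  by_contra hc
  push Not at hc
  obtain ⟨α, hα⟩ : ∃ α, α = 2 / σ ^ 2 * |m| + 2 * ε * r + 2 / σ ^ 2 * ϱ + 1 := ⟨_, rfl⟩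
  have hα0 : 0 < α := by rw [hα]; positivity
  have hs' : s = 1 ∨ s = -1 := by
    rcases hs with h | h
    · exact Or.inl h.1
    · exact Or.inr h.1
  have hs2 : s * s = 1 := by rcases hs' with rfl | rfl <;> norm_num
  have hsx : 0 < s * (x1 - x0) := by
    rcases hs with ⟨rfl, rfl, rfl⟩ | ⟨rfl, rfl, rfl⟩ <;> linarith
  have hx0 : x0 ∈ Icc p q := by
    rcases hs with ⟨rfl, rfl, rfl⟩ | ⟨rfl, rfl, rfl⟩ <;> constructor <;> linarith
  have hx1 : x1 ∈ Icc p q := by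
    rcases hs with ⟨rfl, rfl, rfl⟩ | ⟨rfl, rfl, rfl⟩ <;> constructor <;> linarith
  have hden : 0 < Real.exp (α * s * (x1 - x0)) - 1 := by
    have : 0 < α * s * (x1 - x0) := by rw [mul_assoc]; positivity
    linarith [Real.one_lt_exp_iff.2 this]
  obtain ⟨η, hη⟩ : ∃ η, η = (f x1 - ψ x1) / (Real.exp (α * s * (x1 - x0)) - 1) := ⟨_, rfl⟩
  have hη0 : 0 < η := by rw [hη]; exact div_pos (by linarith) hden
  have hηe : η * (Real.exp (α * s * (x1 - x0)) - 1) = f x1 - ψ x1 := by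
    rw [hη]; field_simp
  have hexp : ∀ x, HasDerivAt (fun x => Real.exp (α * s * (x - x0)))
      (α * s * Real.exp (α * s * (x - x0))) x := by
    intro x
    have := (((hasDerivAt_id x).sub_const x0).const_mul (α * s)).exp
    simp only [id] at this
    convert this using 1
    ring
  have d1 : ∀ x ∈ Icc p q, HasDerivWithinAt
      (fun x => ψ x + η * (Real.exp (α * s * (x - x0)) - 1))
      (ψ' x + η * (α * s) * Real.exp (α * s * (x - x0))) (Icc p q) x := by
    intro x hx
    have := (hψ1 x hx).add (((hexp x).sub_const 1).const_mul η).hasDerivWithinAt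
    exact this.congr_deriv (by ring)
  have d2 : ∀ x ∈ Icc p q, HasDerivWithinAt
      (fun x => ψ' x + η * (α * s) * Real.exp (α * s * (x - x0)))
      (ψ'' x + η * (α * s) ^ 2 * Real.exp (α * s * (x - x0))) (Icc p q) x := by
    intro x hx
    have := (hψ2 x hx).add ((hexp x).const_mul (η * (α * s))).hasDerivWithinAt
    exact this.congr_deriv (by ring)
  have hle0 : ψ x0 + η * (Real.exp (α * s * (x0 - x0)) - 1) ≤ f x0 := by simp [ht0]
  have hle1 : ψ x1 + η * (Real.exp (α * s * (x1 - x0)) - 1) ≤ f x1 := by linarith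
  have hcore := core (m := m) (ε := ε) (h := h) hσ hϱ hpq hf1 hf2 d1 d2
    (fun x hx => barrier hσ hϱ hr hε hη0 hα hs' (hψb x (Ioo_subset_Icc_self hx)).1
      (hψb x (Ioo_subset_Icc_self hx)).2 (hF x hx))
    (fun x hx hxe => by
      apply hz x hx
      rw [hxe]
      have : s * (ψ' x + η * (α * s) * Real.exp (α * s * (x - x0)) - ψ' x)
        = (s * s) * (η * α * Real.exp (α * s * (x - x0))) := by ring
      rw [this, hs2]
      positivity)
    (Or.inr (by
      rcases hs with ⟨-, rfl, rfl⟩ | ⟨-, rfl, rfl⟩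
      · exact hle0
      · exact hle1))
    (Or.inr (by
      rcases hs with ⟨-, rfl, rfl⟩ | ⟨-, rfl, rfl⟩
      · exact hle1
      · exact hle0))
  have hfin := tang_nonneg ((hf1 x0 hx0).sub (d1 x0 hx0)) hx0 hx1 (by
    intro x hx
    have := hcore x hx
    simp only [Pi.sub_apply, sub_self, mul_zero, Real.exp_zero, add_zero, ht0]
    linarith)
  simp only [sub_self, mul_zero, Real.exp_zero, mul_one, ht1] at hfin
  have : (x1 - x0) * (ψ' x0 - (ψ' x0 + η * (α * s))) = -(η * α * (s * (x1 - x0))) := by ring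
  rw [this] at hfin
  have : 0 < η * α * (s * (x1 - x0)) := by positivity
  linarith

theorem stmt16 (b σ ϱ r m : ℝ) (hb : 0 < b) (hσ : 0 < σ) (hϱ : 0 < ϱ) (hr : 0 < r)
    (h : ℝ → ℝ)
    (hLip : ∃ K : NNReal, LipschitzOnWith K h (Icc (0:ℝ) b))
    (hconv : ConvexOn ℝ (Icc (0:ℝ) b) h)
    (hmono : StrictMonoOn h (Icc (0:ℝ) b)) (h0 : h 0 = 0)
    (ε₁ ε₂ : ℝ) (hε₂ : 0 < ε₂) (hε : ε₂ < ε₁)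
    (f₁ f₁' f₁'' f₂ f₂' f₂'' : ℝ → ℝ)
    (hf₁ : IsHJBSolution b σ ϱ r m ε₁ h f₁ f₁' f₁'')
    (hf₂ : IsHJBSolution b σ ϱ r m ε₂ h f₂ f₂' f₂'') :
    ∀ x ∈ Icc (0:ℝ) b, f₂ x < f₁ x ∧
      f₁ x ≤ f₂ x + (ε₁ * σ ^ 2 * r ^ 2 / (2 * ε₂ * ϱ)) * (ε₁ - ε₂) := by
  have hε₁ : 0 < ε₁ := hε₂.trans hε
  have hh : ∀ x ∈ Icc 0 b, 0 ≤ h x := by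
    intro x hx
    rw [← h0]
    exact hmono.monotoneOn (left_mem_Icc.2 hb.le) hx hx.1
  obtain ⟨B1, F1, Z1⟩ := sol_bounds hr hf₁
  obtain ⟨B2, F2, Z2⟩ := sol_bounds hr hf₂
  have hs₁ := hf₁
  have hs₂ := hf₂
  obtain ⟨d1, dd1, -, -, l1, r1⟩ := hs₁
  obtain ⟨d2, dd2, -, -, l2, r2⟩ := hs₂
  have hk : 0 < 2 / σ ^ 2 := by positivity
  have hks : 2 / σ ^ 2 * σ ^ 2 = 2 := by field_simp
  have hHdiff : ∀ x y z, Hfun σ ϱ m ε₁ h x y z = Hfun σ ϱ m ε₂ h x y z + (ε₁ - ε₂) * z ^ 2 := by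
    intro x y z
    unfold Hfun
    linear_combination (1 / 2 * (ε₁ - ε₂) * z ^ 2) * hks
  have F12 : ∀ x ∈ Ioo 0 b, 0 ≤ f₂'' x + Hfun σ ϱ m ε₁ h x (f₂ x) (f₂' x) := by
    intro x hx
    rw [hHdiff]
    have := F2 x hx
    have : 0 ≤ (ε₁ - ε₂) * f₂' x ^ 2 := mul_nonneg (by linarith) (sq_nonneg _)
    linarith
  have hweak : ∀ x ∈ Icc 0 b, f₂ x ≤ f₁ x :=
    weak_comparison hb hσ hϱ hr hε₁ hh hf₁ d2 dd2 B2 F12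
  -- touching points have equal derivatives
  have gd1 : ∀ x ∈ Icc 0 b, HasDerivWithinAt (fun x => f₁ x - f₂ x) (f₁' x - f₂' x) (Icc 0 b) x :=
    fun x hx => (d1 x hx).sub (d2 x hx)
  have gd2 : ∀ x ∈ Icc 0 b, HasDerivWithinAt (fun x => f₁' x - f₂' x) (f₁'' x - f₂'' x) (Icc 0 b) x :=
    fun x hx => (dd1 x hx).sub (dd2 x hx)
  have touchI : ∀ x ∈ Ioo 0 b, f₁ x = f₂ x → f₁' x - f₂' x = 0 ∧ 0 ≤ f₁'' x - f₂'' x := by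
    intro x hx he
    exact second_nonneg (u := fun x => f₁ x - f₂ x) (u' := fun x => f₁' x - f₂' x) hx gd1 (gd2 x (Ioo_subset_Icc_self hx)) (by
      intro y hy
      have := hweak y hy
      simp only [he, sub_self]
      linarith)
  have touch' : ∀ x ∈ Icc 0 b, f₁ x = f₂ x → f₁' x = f₂' x := by
    intro x hx he
    rcases eq_or_lt_of_le hx.1 with rfl | h0
    · rw [l1, l2]
    rcases eq_or_lt_of_le hx.2 with rfl | hb
    · rw [r1, r2]
    linarith [(touchI x ⟨h0, hb⟩ he).1]
  have noint : ∀ x ∈ Icc 0 b, f₁ x = f₂ x → 0 < f₁' x → f₁' x < r → False := by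
    intro x hx he hz0 hzr
    rcases eq_or_lt_of_le hx.1 with rfl | h0
    · linarith
    rcases eq_or_lt_of_le hx.2 with rfl | hb
    · linarith
    have hI : x ∈ Ioo 0 b := ⟨h0, hb⟩
    obtain ⟨t1, t2⟩ := touchI x hI he
    have e1 := Z1 x hI hz0 hzr
    have e2 := F2 x hI
    have e3 : f₂' x = f₁' x := by linarith
    rw [hHdiff, he] at e1
    rw [e3] at e2
    have : 0 < (ε₁ - ε₂) * f₁' x ^ 2 := mul_pos (by linarith) (by positivity)
    linarith
  have c1 : ContinuousOn f₁' (Icc 0 b) := fun x hx => (dd1 x hx).continuousWithinAt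
  have cg : ContinuousOn (fun x => f₁ x - f₂ x) (Icc 0 b) :=
    fun x hx => (gd1 x hx).continuousWithinAt
  have compactT : ∀ c : ℝ, IsCompact {x ∈ Icc 0 b | f₁ x = f₂ x ∧ f₁' x = c} := by
    intro c
    have h1 := (cg.prodMk c1).preimage_isClosed_of_isClosed isClosed_Icc
      (isClosed_singleton (x := ((0:ℝ), c)))
    refine isCompact_Icc.of_isClosed_subset (s := Icc 0 b) ?_ (fun x hx => hx.1)
    convert h1 using 1
    ext x
    simp [sub_eq_zero]
  -- generic Hopf application
  have hopf1 : ∀ p q s x0 x1, 0 ≤ p → p < q → q ≤ b →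
      ((s = 1 ∧ x0 = p ∧ x1 = q) ∨ (s = -1 ∧ x0 = q ∧ x1 = p)) →
      (∀ x ∈ Ioo p q, 0 < s * (f₁' x - f₂' x) → 0 < f₁' x ∧ f₁' x < r) →
      f₁ x0 = f₂ x0 → f₁ x1 = f₂ x1 := by
    intro p q s x0 x1 hp hpq hq hs hb' ht
    have hsub : Icc p q ⊆ Icc 0 b := Icc_subset_Icc hp hq
    have hsubo : Ioo p q ⊆ Ioo 0 b := Ioo_subset_Ioo hp hq
    have hx0 : x0 ∈ Icc p q := by
      rcases hs with ⟨rfl, rfl, rfl⟩ | ⟨rfl, rfl, rfl⟩ <;> constructor <;> linarith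
    have hx1 : x1 ∈ Icc p q := by
      rcases hs with ⟨rfl, rfl, rfl⟩ | ⟨rfl, rfl, rfl⟩ <;> constructor <;> linarith
    refine le_antisymm ?_ (hweak x1 (hsub hx1))
    exact hopf (m := m) (h := h) hσ hϱ hr hε₁ hpq hs
      (fun x hx => (d1 x (hsub hx)).mono hsub) (fun x hx => (dd1 x (hsub hx)).mono hsub)
      (fun x hx => (d2 x (hsub hx)).mono hsub) (fun x hx => (dd2 x (hsub hx)).mono hsub)
      (fun x hx => B2 x (hsub hx)) (fun x hx => F12 x (hsubo hx))
      (fun x hx hd => Z1 x (hsubo hx) (hb' x hx hd).1 (hb' x hx hd).2)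
      ht (touch' x0 (hsub hx0) ht)
  have no0 : ∀ x ∈ Icc 0 b, f₁ x = f₂ x → f₁' x = 0 → False := by
    intro x hx he hz
    obtain ⟨a, ⟨ha, hae, haz⟩, hamax⟩ := (compactT 0).exists_isGreatest ⟨x, hx, he, hz⟩
    have hab : a < b := by
      rcases eq_or_lt_of_le ha.2 with h' | h'
      · rw [h', r1] at haz; linarith
      · exact h'
    have hev := (c1 a ha).eventually_lt_const (show f₁' a < r by rw [haz]; exact hr)
    rw [eventually_nhdsWithin_iff, Metric.eventually_nhds_iff] at hev
    obtain ⟨δ, hδ, hev⟩ := hev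
    obtain ⟨q, hq1, hq2⟩ : ∃ y, a < y ∧ y < min b (a + δ) :=
      exists_between (lt_min hab (by linarith))
    have hqb := hq2.trans_le (min_le_left _ _)
    have hqd := hq2.trans_le (min_le_right _ _)
    have hlt : ∀ y, a < y → y ≤ q → f₁' y < r := by
      intro y h1 h2
      apply hev
      · rw [Real.dist_eq, abs_lt]; constructor <;> linarith
      · exact ⟨by linarith [ha.1], by linarith⟩
    have hqe := hopf1 a q 1 a q ha.1 hq1 hqb.le (Or.inl ⟨rfl, rfl, rfl⟩) (by
      intro y hy hd
      have hb2 := B2 y ⟨by linarith [ha.1, hy.1], by linarith [hy.2]⟩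
      exact ⟨by linarith, hlt y hy.1 hy.2.le⟩) hae
    have hqI : q ∈ Icc 0 b := ⟨by linarith [ha.1], hqb.le⟩
    rcases eq_or_lt_of_le (B1 q hqI).1 with e | e
    · have := hamax ⟨hqI, hqe, e.symm⟩
      linarith
    · exact noint q hqI hqe e (hlt q hq1 le_rfl)
  have nor : ∀ x ∈ Icc 0 b, f₁ x = f₂ x → f₁' x = r → False := by
    intro x hx he hz
    obtain ⟨a, ⟨ha, hae, haz⟩, hamin⟩ := (compactT r).exists_isLeast ⟨x, hx, he, hz⟩
    have hab : 0 < a := by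
      rcases eq_or_lt_of_le ha.1 with h' | h'
      · rw [← h', l1] at haz; linarith
      · exact h'
    have hev := (c1 a ha).eventually_const_lt (show 0 < f₁' a by rw [haz]; exact hr)
    rw [eventually_nhdsWithin_iff, Metric.eventually_nhds_iff] at hev
    obtain ⟨δ, hδ, hev⟩ := hev
    obtain ⟨q, hq2, hq1⟩ : ∃ y, max 0 (a - δ) < y ∧ y < a :=
      exists_between (max_lt hab (by linarith))
    have hqb := (le_max_left _ _).trans_lt hq2
    have hqd := (le_max_right _ _).trans_lt hq2
    have hlt : ∀ y, y < a → q ≤ y → 0 < f₁' y := by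
      intro y h1 h2
      apply hev
      · rw [Real.dist_eq, abs_lt]; constructor <;> linarith
      · exact ⟨by linarith, by linarith [ha.2]⟩
    have hqe := hopf1 q a (-1) a q hqb.le hq1 ha.2 (Or.inr ⟨rfl, rfl, rfl⟩) (by
      intro y hy hd
      have hb2 := B2 y ⟨by linarith [hy.1], by linarith [hy.2, ha.2]⟩
      exact ⟨hlt y hy.2 hy.1.le, by linarith⟩) hae
    have hqI : q ∈ Icc 0 b := ⟨hqb.le, by linarith [ha.2]⟩
    rcases eq_or_lt_of_le (B1 q hqI).2 with e | e
    · have := hamin ⟨hqI, hqe, e⟩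
      linarith
    · exact noint q hqI hqe (hlt q hq1 le_rfl) e
  intro x hx
  constructor
  · refine lt_of_le_of_ne (hweak x hx) ?_
    intro he
    rcases eq_or_lt_of_le (B1 x hx).1 with e | e
    · exact no0 x hx he.symm e.symm
    rcases eq_or_lt_of_le (B1 x hx).2 with e' | e'
    · exact nor x hx he.symm e'
    · exact noint x hx he.symm e e'
  · set k : ℝ := σ ^ 2 * r ^ 2 / (2 * ϱ) with hkd
    have hke : ϱ * k = σ ^ 2 * r ^ 2 / 2 := by rw [hkd]; field_simp
    have hup := weak_comparison (ψ := fun x => f₁ x - k * (ε₁ - ε₂)) hb hσ hϱ hr hε₂ hh hf₂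
      (fun x hx => (d1 x hx).sub_const _) dd1 B1 (by
        intro y hy
        have e1 := F1 y hy
        have hb1 := B1 y (Ioo_subset_Icc_self hy)
        rw [hHdiff] at e1
        have : Hfun σ ϱ m ε₂ h y (f₁ y - k * (ε₁ - ε₂)) (f₁' y)
            = Hfun σ ϱ m ε₂ h y (f₁ y) (f₁' y) + (ε₁ - ε₂) * r ^ 2 := by
          unfold Hfun
          linear_combination (2 / σ ^ 2 * (ε₁ - ε₂)) * hke + (1 / 2 * (ε₁ - ε₂) * r ^ 2) * hks
        rw [this]
        have h2 : f₁' y ^ 2 ≤ r ^ 2 := by nlinarith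
        have := mul_le_mul_of_nonneg_left h2 (sub_nonneg.2 hε.le)
        linarith) x hx
    have hk0 : 0 ≤ k := by positivity
    have hc : ε₁ * σ ^ 2 * r ^ 2 / (2 * ε₂ * ϱ) = (ε₁ / ε₂) * k := by
      rw [hkd]; field_simp
    have h1 : 1 ≤ ε₁ / ε₂ := by rw [le_div_iff₀ hε₂]; linarith
    have h2 : k ≤ (ε₁ / ε₂) * k := le_mul_of_one_le_left hk0 h1
    have h3 := mul_le_mul_of_nonneg_right h2 (sub_nonneg.2 hε.le)
    rw [hc]
    linarith
end

section
/- For every ε ∈ [0,∞): β_ε ≤ liminf_{δ→0} β_{ε+δ} ≤ limsup_{δ→0} β̂_{ε+δ} ≤ β̂_ε, where δ → 0 through values with ε + δ ≥ 0. Consequently, if β_ε = β̂_ε (i.e., the optimal reflecting cut-off is unique at ε), then lim_{δ→0} β_{ε+δ} = lim_{δ→0} β̂_{ε+δ} = β̂_ε. -/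
open Set Filter Topology

section aux

variable {b σ ϱ r m ε : ℝ} {h f f' f'' : ℝ → ℝ}

lemma aux_closed {b : ℝ} (hb : 0 < b) {u : ℝ → ℝ} (hu : ContinuousOn u (Icc 0 b))
    (H : ∀ x ∈ Ioo 0 b, 0 ≤ u x) : ∀ x ∈ Icc 0 b, 0 ≤ u x := by
  intro x hx
  have hx' : x ∈ closure (Ioo 0 b) := by rwa [closure_Ioo hb.ne]
  have hc : ContinuousWithinAt u (Ioo 0 b) x := (hu x hx).mono Ioo_subset_Icc_self
  exact ContinuousWithinAt.closure_le hx' continuousWithinAt_const hc H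

lemma aux_contf (S : IsHJBSolution b σ ϱ r m ε h f f' f'') : ContinuousOn f (Icc 0 b) :=
  fun x hx => (S.1 x hx).continuousWithinAt

lemma aux_contf' (S : IsHJBSolution b σ ϱ r m ε h f f' f'') : ContinuousOn f' (Icc 0 b) :=
  fun x hx => (S.2.1 x hx).continuousWithinAt

lemma aux_contH (hc : ContinuousOn h (Icc 0 b)) (S : IsHJBSolution b σ ϱ r m ε h f f' f'') :
    ContinuousOn (fun x => Hfun σ ϱ m ε h x (f x) (f' x)) (Icc 0 b) := by
  have h1 := aux_contf S
  have h2 := aux_contf' S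
  unfold Hfun
  fun_prop

lemma aux_contE (hc : ContinuousOn h (Icc 0 b)) (S : IsHJBSolution b σ ϱ r m ε h f f' f'') :
    ContinuousOn (fun x => f'' x + Hfun σ ϱ m ε h x (f x) (f' x)) (Icc 0 b) :=
  S.2.2.1.add (aux_contH hc S)

lemma aux_E_nonneg (hb : 0 < b) (hc : ContinuousOn h (Icc 0 b))
    (S : IsHJBSolution b σ ϱ r m ε h f f' f'') :
    ∀ x ∈ Icc 0 b, 0 ≤ f'' x + Hfun σ ϱ m ε h x (f x) (f' x) := by
  apply aux_closed hb (aux_contE hc S)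
  intro x hx
  have := S.2.2.2.1 x hx
  rw [← this]
  exact (min_le_left _ _).trans (min_le_left _ _)

lemma aux_f'_nonneg (hb : 0 < b)
    (S : IsHJBSolution b σ ϱ r m ε h f f' f'') :
    ∀ x ∈ Icc 0 b, 0 ≤ f' x := by
  apply aux_closed hb (aux_contf' S)
  intro x hx
  have := S.2.2.2.1 x hx
  rw [← this]
  exact (min_le_left _ _).trans (min_le_right _ _)

lemma aux_f'_le (hb : 0 < b)
    (S : IsHJBSolution b σ ϱ r m ε h f f' f'') :
    ∀ x ∈ Icc 0 b, f' x ≤ r := by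
  have : ∀ x ∈ Icc 0 b, 0 ≤ r - f' x := by
    apply aux_closed hb (continuousOn_const.sub (aux_contf' S))
    intro x hx
    have := S.2.2.2.1 x hx
    rw [← this]
    exact (min_le_right _ _)
  intro x hx
  linarith [this x hx]

lemma aux_E_zero (S : IsHJBSolution b σ ϱ r m ε h f f' f'') {x : ℝ} (hx : x ∈ Ioo 0 b)
    (h1 : 0 < f' x) (h2 : f' x < r) :
    f'' x + Hfun σ ϱ m ε h x (f x) (f' x) = 0 := by
  have := S.2.2.2.1 x hx
  rcases min_choice (min (f'' x + Hfun σ ϱ m ε h x (f x) (f' x)) (f' x)) (r - f' x) with h3 | h3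
  · rw [h3] at this
    rcases min_choice (f'' x + Hfun σ ϱ m ε h x (f x) (f' x)) (f' x) with h4 | h4
    · rw [h4] at this; exact this
    · rw [h4] at this; linarith
  · rw [h3] at this; linarith

lemma aux_eq_closure {b : ℝ} {u : ℝ → ℝ} (hu : ContinuousOn u (Icc 0 b))
    {s : Set ℝ} (hs : s ⊆ Icc 0 b) (H : ∀ x ∈ s, u x = 0) {x : ℝ} (hx : x ∈ closure s) :
    u x = 0 := by
  have hxI : x ∈ Icc 0 b := (closure_minimal hs isClosed_Icc) hx
  have hc : ContinuousWithinAt u s x := (hu x hxI).mono hs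
  exact le_antisymm (ContinuousWithinAt.closure_le hx hc continuousWithinAt_const
      (fun y hy => (H y hy).le))
    (ContinuousWithinAt.closure_le hx continuousWithinAt_const hc (fun y hy => (H y hy).ge))

lemma aux_hasDeriv (S : IsHJBSolution b σ ϱ r m ε h f f' f'') {x : ℝ} (hx : x ∈ Ioo 0 b) :
    HasDerivAt f (f' x) x ∧ HasDerivAt f' (f'' x) x :=
  ⟨(S.1 x (Ioo_subset_Icc_self hx)).hasDerivAt (Icc_mem_nhds hx.1 hx.2),
   (S.2.1 x (Ioo_subset_Icc_self hx)).hasDerivAt (Icc_mem_nhds hx.1 hx.2)⟩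

/-- right neighbourhood property from continuity -/
lemma aux_right {b a c : ℝ} {u : ℝ → ℝ} (hu : ContinuousOn u (Icc 0 b)) (ha : 0 ≤ a)
    (hab : a < b) (hac : u a < c) : ∃ d, a < d ∧ d < b ∧ ∀ y ∈ Icc a d, u y < c := by
  have h1 : ∀ᶠ y in 𝓝[Icc 0 b] a, u y < c := (hu a ⟨ha, hab.le⟩).eventually_lt_const hac
  rw [eventually_nhdsWithin_iff, Metric.eventually_nhds_iff] at h1
  obtain ⟨e, he, h2⟩ := h1
  refine ⟨min (a + e / 2) ((a + b) / 2), ?_, ?_, ?_⟩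
  · apply lt_min <;> linarith
  · apply lt_of_le_of_lt (min_le_right _ _); linarith
  · intro y hy
    have h3 := hy.2.trans (min_le_left _ _)
    have h4 := hy.2.trans (min_le_right _ _)
    apply h2
    · rw [Real.dist_eq, abs_lt]; constructor <;> linarith [hy.1]
    · exact ⟨ha.trans hy.1, by linarith⟩

lemma aux_left {b a c : ℝ} {u : ℝ → ℝ} (hu : ContinuousOn u (Icc 0 b)) (ha : 0 < a)
    (hab : a ≤ b) (hac : c < u a) : ∃ d, d < a ∧ 0 < d ∧ ∀ y ∈ Icc d a, c < u y := by
  have h1 : ∀ᶠ y in 𝓝[Icc 0 b] a, c < u y := (hu a ⟨ha.le, hab⟩).eventually_const_lt hac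
  rw [eventually_nhdsWithin_iff, Metric.eventually_nhds_iff] at h1
  obtain ⟨e, he, h2⟩ := h1
  refine ⟨max (a - e / 2) (a / 2), ?_, ?_, ?_⟩
  · apply max_lt <;> linarith
  · apply lt_of_lt_of_le _ (le_max_right _ _); linarith
  · intro y hy
    have h3 := (le_max_left _ _).trans hy.1
    have h4 := (le_max_right _ _).trans hy.1
    apply h2
    · rw [Real.dist_eq, abs_lt]; constructor <;> linarith [hy.2]
    · exact ⟨by linarith, hy.2.trans hab⟩

lemma aux_pos (hb : 0 < b) (hσ : 0 < σ) (hϱ : 0 < ϱ) (hr : 0 < r) (hε : 0 ≤ ε)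
    (hc : ContinuousOn h (Icc 0 b))
    (hconv : ConvexOn ℝ (Icc (0:ℝ) b) h)
    (hmono : StrictMonoOn h (Icc (0:ℝ) b)) (h0 : h 0 = 0)
    (S : IsHJBSolution b σ ϱ r m ε h f f' f'') :
    ∀ x ∈ Ioc 0 b, 0 < f' x := by
  intro x hx
  by_contra hneg
  have hx0 : f' x = 0 := le_antisymm (not_lt.1 hneg) (aux_f'_nonneg hb S x ⟨hx.1.le, hx.2⟩)
  have hcf' := aux_contf' S
  have hcl : IsCompact (Icc 0 b ∩ f' ⁻¹' {0}) :=
    isCompact_Icc.of_isClosed_subset (hcf'.preimage_isClosed_of_isClosed isClosed_Icc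
      isClosed_singleton) inter_subset_left
  obtain ⟨a, ⟨haI, ha0⟩, hamax⟩ := hcl.exists_isGreatest ⟨x, ⟨hx.1.le, hx.2⟩, hx0⟩
  have hxa : x ≤ a := hamax ⟨⟨hx.1.le, hx.2⟩, hx0⟩
  have ha : 0 < a := hx.1.trans_le hxa
  have ha0 : f' a = 0 := ha0
  have hab : a < b := by
    rcases haI.2.lt_or_eq with h1 | h1
    · exact h1
    · rw [h1, S.2.2.2.2.2] at ha0; linarith
  have hpos : ∀ y ∈ Ioc a b, 0 < f' y := by
    intro y hy
    have hyI : y ∈ Icc 0 b := ⟨ha.le.trans hy.1.le, hy.2⟩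
    rcases (aux_f'_nonneg hb S y hyI).lt_or_eq with h1 | h1
    · exact h1
    · exact absurd (hamax ⟨hyI, h1.symm⟩) (not_le.2 hy.1)
  have haO : a ∈ Ioo 0 b := ⟨ha, hab⟩
  have hf''a : f'' a = 0 := by
    apply IsLocalMin.hasDerivAt_eq_zero _ (aux_hasDeriv S haO).2
    filter_upwards [Icc_mem_nhds ha hab] with y hy
    rw [ha0]; exact aux_f'_nonneg hb S y hy
  have hha : 0 < h a := by
    rw [← h0]; exact hmono ⟨le_rfl, hb.le⟩ haI ha
  have hp : 0 < h a / a := div_pos hha ha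
  obtain ⟨d, had, hdb, hd⟩ := aux_right hcf' ha.le hab
    (c := min r (h a / a / ϱ)) (by rw [ha0]; exact lt_min hr (div_pos hp hϱ))
  have hE : ∀ y ∈ Ioo a d, f'' y + Hfun σ ϱ m ε h y (f y) (f' y) = 0 := by
    intro y hy
    apply aux_E_zero S ⟨ha.trans hy.1, hy.2.trans hdb⟩ (hpos y ⟨hy.1, (hy.2.trans hdb).le⟩)
    exact (hd y (Ioo_subset_Icc_self hy)).trans_le (min_le_left _ _)
  have hEa : f'' a + Hfun σ ϱ m ε h a (f a) (f' a) = 0 := by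
    apply aux_eq_closure (aux_contE hc S) (s := Ioo a d) _ hE
    · rw [closure_Ioo had.ne]; exact ⟨le_rfl, had.le⟩
    · intro y hy; exact ⟨(ha.trans hy.1).le, (hy.2.trans hdb).le⟩
  have hs : 0 < 2 / σ ^ 2 := by positivity
  have hfa : ϱ * f a = h a := by
    rw [hf''a, ha0] at hEa
    unfold Hfun at hEa
    have : m * 0 + 1 / 2 * σ ^ 2 * ε * 0 ^ 2 - ϱ * f a + h a = 0 := by
      rcases mul_eq_zero.1 (show 2 / σ ^ 2 * (m * 0 + 1 / 2 * σ ^ 2 * ε * 0 ^ 2 - ϱ * f a + h a) = 0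
        by linarith) with h1 | h1
      · exact absurd h1 hs.ne'
      · exact h1
    linarith
  have hfy : ∀ y ∈ Ioo a d, f y - f a ≤ (h a / a / ϱ) * (y - a) := by
    intro y hy
    obtain ⟨ξ, hξ, he⟩ := exists_hasDerivAt_eq_slope f f' hy.1
      ((aux_contf S).mono (Icc_subset_Icc ha.le (hy.2.trans hdb).le))
      (fun z hz => (aux_hasDeriv S ⟨ha.trans hz.1, hz.2.trans (hy.2.trans hdb)⟩).1)
    have h1 := (hd ξ ⟨hξ.1.le, (hξ.2.trans hy.2).le⟩).trans_le (min_le_right _ _)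
    rw [he] at h1
    have h2 : 0 < y - a := sub_pos.2 hy.1
    rw [div_lt_iff₀ h2] at h1
    exact h1.le
  have hhy : ∀ y ∈ Ioo a d, h a / a * (y - a) ≤ h y - h a := by
    intro y hy
    have h1 := hconv.slope_mono_adjacent (x := 0) (y := a) (z := y) ⟨le_rfl, hb.le⟩
      ⟨(ha.trans hy.1).le, (hy.2.trans hdb).le⟩ ha hy.1
    rw [h0, sub_zero, sub_zero] at h1
    rwa [le_div_iff₀ (sub_pos.2 hy.1)] at h1
  set C := 2 / σ ^ 2 * |m| with hC
  have hg : ∀ y ∈ Ioo a d, f'' y ≤ C * f' y := by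
    intro y hy
    have h1 := hE y hy
    have h2 := mul_le_mul_of_nonneg_left (hfy y hy) hϱ.le
    have h3 := hhy y hy
    have h4 : ϱ * (h a / a / ϱ * (y - a)) = h a / a * (y - a) := by field_simp
    have h5 := hpos y ⟨hy.1, (hy.2.trans hdb).le⟩
    have h6 : 0 ≤ 1 / 2 * σ ^ 2 * ε * f' y ^ 2 := by positivity
    have h7 : -m * f' y ≤ |m| * f' y := mul_le_mul_of_nonneg_right (neg_le_abs m) h5.le
    have h8 : f'' y = 2 / σ ^ 2 * -(m * f' y + 1 / 2 * σ ^ 2 * ε * f' y ^ 2 - ϱ * f y + h y) := by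
      unfold Hfun at h1; linarith
    rw [h8, hC, mul_assoc (2 / σ ^ 2) |m| (f' y)]
    apply mul_le_mul_of_nonneg_left _ hs.le
    nlinarith
  have hsub : Icc a d ⊆ Icc 0 b := Icc_subset_Icc ha.le hdb.le
  have hanti : AntitoneOn (fun y => f' y * Real.exp (-C * y)) (Icc a d) := by
    have hder : ∀ y ∈ interior (Icc a d), HasDerivWithinAt (fun y => f' y * Real.exp (-C * y))
        (f'' y * Real.exp (-C * y) + f' y * (Real.exp (-C * y) * (-C))) (interior (Icc a d)) y := by
      intro y hy
      rw [interior_Icc] at hy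
      have h1 := (aux_hasDeriv S ⟨ha.trans hy.1, hy.2.trans hdb⟩).2
      have h2 : HasDerivAt (fun y => Real.exp (-C * y)) (Real.exp (-C * y) * (-C)) y := by
        simpa using ((hasDerivAt_id y).const_mul (-C)).exp
      exact (h1.mul h2).hasDerivWithinAt
    apply antitoneOn_of_hasDerivWithinAt_nonpos (convex_Icc a d) _ hder
    · intro y hy
      rw [interior_Icc] at hy
      have := hg y hy
      have h3 := Real.exp_pos (-C * y)
      nlinarith
    · exact (hcf'.mono hsub).mul (by fun_prop)
  have := hanti ⟨le_rfl, had.le⟩ ⟨had.le, le_rfl⟩ had.le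
  simp only [ha0, zero_mul] at this
  have h1 := hpos d ⟨had, hdb.le⟩
  have h3 := mul_pos h1 (Real.exp_pos (-C * d))
  linarith

/-- second order condition at a maximum with vanishing derivative -/
lemma aux_second {b : ℝ} (hb : 0 < b) {W W' W'' : ℝ → ℝ}
    (h1 : ∀ x ∈ Icc (0:ℝ) b, HasDerivWithinAt W (W' x) (Icc (0:ℝ) b) x)
    (h2 : ∀ x ∈ Icc (0:ℝ) b, HasDerivWithinAt W' (W'' x) (Icc (0:ℝ) b) x)
    (h3 : ContinuousOn W'' (Icc (0:ℝ) b)) {x : ℝ} (hx : x ∈ Icc 0 b)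
    (hmax : ∀ y ∈ Icc 0 b, W y ≤ W x) (hx' : W' x = 0) : W'' x ≤ 0 := by
  by_contra hneg
  rw [not_le] at hneg
  have c1 : ContinuousOn W (Icc 0 b) := fun x hx => (h1 x hx).continuousWithinAt
  have c2 : ContinuousOn W' (Icc 0 b) := fun x hx => (h2 x hx).continuousWithinAt
  have d1 : ∀ x ∈ Ioo 0 b, HasDerivAt W (W' x) x := fun x hx =>
    (h1 x (Ioo_subset_Icc_self hx)).hasDerivAt (Icc_mem_nhds hx.1 hx.2)
  have d2 : ∀ x ∈ Ioo 0 b, HasDerivAt W' (W'' x) x := fun x hx =>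
    (h2 x (Ioo_subset_Icc_self hx)).hasDerivAt (Icc_mem_nhds hx.1 hx.2)
  rcases hx.2.lt_or_eq with hxb | hxb
  · obtain ⟨d, hxd, hdb, hd⟩ := aux_right (u := fun y => - W'' y) h3.neg hx.1 hxb
      (c := 0) (by simpa using hneg)
    obtain ⟨ξ, hξ, he⟩ := exists_hasDerivAt_eq_slope W W' hxd
      (c1.mono (Icc_subset_Icc hx.1 hdb.le))
      (fun z hz => d1 z ⟨hx.1.trans_lt hz.1, hz.2.trans hdb⟩)
    obtain ⟨ζ, hζ, he'⟩ := exists_hasDerivAt_eq_slope W' W'' hξ.1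
      (c2.mono (Icc_subset_Icc hx.1 (hξ.2.trans hdb).le))
      (fun z hz => d2 z ⟨hx.1.trans_lt hz.1, hz.2.trans (hξ.2.trans hdb)⟩)
    have k1 : 0 < W'' ζ := by simpa using hd ζ ⟨hζ.1.le, (hζ.2.trans hξ.2).le⟩
    rw [he', hx', sub_zero] at k1
    have k2 : 0 < W' ξ := by
      have := (div_pos_iff_of_pos_right (sub_pos.2 hξ.1)).1 k1
      exact this
    rw [he] at k2
    have k3 := (div_pos_iff_of_pos_right (sub_pos.2 hxd)).1 k2
    have := hmax d ⟨hx.1.trans hxd.le, hdb.le⟩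
    linarith
  · have hx0 : 0 < x := by rw [hxb]; exact hb
    obtain ⟨d, hdx, hd0, hd⟩ := aux_left h3 hx0 hx.2 (c := 0) hneg
    obtain ⟨ξ, hξ, he⟩ := exists_hasDerivAt_eq_slope W W' hdx
      (c1.mono (Icc_subset_Icc hd0.le hx.2))
      (fun z hz => d1 z ⟨hd0.trans hz.1, hz.2.trans_le hx.2⟩)
    obtain ⟨ζ, hζ, he'⟩ := exists_hasDerivAt_eq_slope W' W'' hξ.2
      (c2.mono (Icc_subset_Icc (hd0.trans hξ.1).le hx.2))
      (fun z hz => d2 z ⟨(hd0.trans hξ.1).trans hz.1, hz.2.trans_le hx.2⟩)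
    have k1 : 0 < W'' ζ := hd ζ ⟨(hξ.1.trans hζ.1).le, hζ.2.le⟩
    rw [he', hx'] at k1
    have k2 := (div_pos_iff_of_pos_right (sub_pos.2 hξ.2)).1 k1
    have k2' : W' ξ < 0 := by linarith
    rw [he] at k2'
    have k3 : W x - W d < 0 := by
      by_contra hh
      exact absurd k2' (not_lt.2 (div_nonneg (not_lt.1 hh) (sub_pos.2 hdx).le))
    have := hmax d ⟨hd0.le, hdx.le.trans hx.2⟩
    linarith

lemma aux_E_zero_lt (hb : 0 < b) (hσ : 0 < σ) (hϱ : 0 < ϱ) (hr : 0 < r) (hε : 0 ≤ ε)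
    (hc : ContinuousOn h (Icc 0 b))
    (hconv : ConvexOn ℝ (Icc (0:ℝ) b) h)
    (hmono : StrictMonoOn h (Icc (0:ℝ) b)) (h0 : h 0 = 0)
    (S : IsHJBSolution b σ ϱ r m ε h f f' f'') {x : ℝ} (hx : x ∈ Icc 0 b) (hlt : f' x < r) :
    f'' x + Hfun σ ϱ m ε h x (f x) (f' x) = 0 := by
  have hpos := aux_pos hb hσ hϱ hr hε hc hconv hmono h0 S
  have hxb : x < b := by
    rcases hx.2.lt_or_eq with h1 | h1
    · exact h1
    · rw [h1, S.2.2.2.2.2] at hlt; exact absurd hlt (lt_irrefl _)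
  obtain ⟨d, hxd, hdb, hd⟩ := aux_right (aux_contf' S) hx.1 hxb hlt
  apply aux_eq_closure (aux_contE hc S) (s := Ioo x d)
  · intro y hy; exact ⟨hx.1.trans hy.1.le, (hy.2.trans hdb).le⟩
  · intro y hy
    have h1 : 0 < y := hx.1.trans_lt hy.1
    have h2 : y < b := hy.2.trans hdb
    exact aux_E_zero S ⟨h1, h2⟩ (hpos y ⟨h1, h2.le⟩) (hd y (Ioo_subset_Icc_self hy))
  · rw [closure_Ioo hxd.ne]; exact ⟨le_rfl, hxd.le⟩

lemma aux_comp {ε₁ ε₂ : ℝ} {f₁ f₁' f₁'' f₂ f₂' f₂'' : ℝ → ℝ}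
    (hb : 0 < b) (hσ : 0 < σ) (hϱ : 0 < ϱ) (hr : 0 < r)
    (hε₂ : 0 ≤ ε₂)
    (hc : ContinuousOn h (Icc 0 b))
    (hconv : ConvexOn ℝ (Icc (0:ℝ) b) h)
    (hmono : StrictMonoOn h (Icc (0:ℝ) b)) (h0 : h 0 = 0)
    (S₁ : IsHJBSolution b σ ϱ r m ε₁ h f₁ f₁' f₁'')
    (S₂ : IsHJBSolution b σ ϱ r m ε₂ h f₂ f₂' f₂'') :
    ∀ x ∈ Icc 0 b, f₁ x - f₂ x ≤ σ ^ 2 * r ^ 2 / (2 * ϱ) * |ε₁ - ε₂| := by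
  set W := fun x => f₁ x - f₂ x with hW
  have cW : ContinuousOn W (Icc 0 b) := (aux_contf S₁).sub (aux_contf S₂)
  obtain ⟨x₀, hx₀, hmax₀⟩ := isCompact_Icc.exists_isMaxOn ⟨0, le_rfl, hb.le⟩ cW
  have hcl : IsCompact (Icc 0 b ∩ W ⁻¹' {W x₀}) :=
    isCompact_Icc.of_isClosed_subset (cW.preimage_isClosed_of_isClosed isClosed_Icc
      isClosed_singleton) inter_subset_left
  obtain ⟨x, ⟨hx, hxm⟩, hleast⟩ := hcl.exists_isLeast ⟨x₀, hx₀, rfl⟩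
  have hxm : W x = W x₀ := hxm
  have hmax : ∀ y ∈ Icc 0 b, W y ≤ W x := by
    intro y hy; rw [hxm]; exact hmax₀ hy
  have d1 : ∀ x ∈ Icc (0:ℝ) b, HasDerivWithinAt W (f₁' x - f₂' x) (Icc (0:ℝ) b) x :=
    fun x hx => (S₁.1 x hx).sub (S₂.1 x hx)
  have d2 : ∀ x ∈ Icc (0:ℝ) b, HasDerivWithinAt (fun x => f₁' x - f₂' x)
      ((fun x => f₁'' x - f₂'' x) x) (Icc (0:ℝ) b) x :=
    fun x hx => (S₁.2.1 x hx).sub (S₂.2.1 x hx)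
  have hW' : f₁' x - f₂' x = 0 := by
    rcases hx.1.lt_or_eq with hx0 | hx0
    · rcases hx.2.lt_or_eq with hxb | hxb
      · apply IsLocalMax.hasDerivAt_eq_zero _ ((d1 x hx).hasDerivAt (Icc_mem_nhds hx0 hxb))
        filter_upwards [Icc_mem_nhds hx0 hxb] with y hy using hmax y hy
      · rw [hxb, S₁.2.2.2.2.2, S₂.2.2.2.2.2, sub_self]
    · rw [← hx0, S₁.2.2.2.2.1, S₂.2.2.2.2.1, sub_self]
  have hW'' := aux_second (W' := fun x => f₁' x - f₂' x) hb d1 d2 (S₁.2.2.1.sub S₂.2.2.1) hx hmax hW'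
  have hE1 := aux_E_nonneg hb hc S₁ x hx
  have hE2 : f₂'' x + Hfun σ ϱ m ε₂ h x (f₂ x) (f₂' x) = 0 := by
    rcases (aux_f'_le hb S₂ x hx).lt_or_eq with hlt | heq
    · exact aux_E_zero_lt hb hσ hϱ hr hε₂ hc hconv hmono h0 S₂ hx hlt
    · have hx0 : 0 < x := by
        rcases hx.1.lt_or_eq with hx0 | hx0
        · exact hx0
        · rw [← hx0, S₂.2.2.2.2.1] at heq; linarith
      apply aux_eq_closure (aux_contE hc S₂) (s := {y | y ∈ Icc 0 b ∧ f₂' y < r})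
      · intro y hy; exact hy.1
      · intro y hy
        exact aux_E_zero_lt hb hσ hϱ hr hε₂ hc hconv hmono h0 S₂ hy.1 hy.2
      · by_contra hncl
        rw [Metric.mem_closure_iff] at hncl
        push Not at hncl
        obtain ⟨e, he, hfar⟩ := hncl
        set d := max (x - e / 2) (x / 2) with hd
        have hdx : d < x := by apply max_lt <;> linarith
        have hd0 : 0 < d := lt_of_lt_of_le (by linarith) (le_max_right _ _)
        have hde : x - e / 2 ≤ d := le_max_left _ _
        have hanti : AntitoneOn W (Icc d x) := by
          apply antitoneOn_of_hasDerivWithinAt_nonpos (convex_Icc d x) (f' := fun x => f₁' x - f₂' x)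
          · exact cW.mono (Icc_subset_Icc hd0.le hx.2)
          · intro y hy
            exact (d1 y (Icc_subset_Icc hd0.le hx.2 (interior_subset hy))).mono
              (interior_subset.trans (Icc_subset_Icc hd0.le hx.2))
          · intro y hy
            have hy := interior_subset hy
            have hyI := (Icc_subset_Icc hd0.le hx.2 hy)
            have h1 := aux_f'_le hb S₁ y hyI
            have h2 : r ≤ f₂' y := by
              by_contra hh
              have := hfar y ⟨hyI, not_le.1 hh⟩
              rw [Real.dist_eq, abs_of_nonneg (by linarith [hy.2])] at this
              linarith [hy.1]
            linarith
        have h1 := hanti ⟨le_rfl, hdx.le⟩ ⟨hdx.le, le_rfl⟩ hdx.le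
        have hdI : d ∈ Icc 0 b := ⟨hd0.le, hdx.le.trans hx.2⟩
        have h2 : W d = W x₀ := by rw [← hxm]; exact le_antisymm (hmax d hdI) h1
        exact absurd (hleast ⟨hdI, h2⟩) (not_le.2 hdx)
  have hz0 := aux_f'_nonneg hb S₂ x hx
  have hzr := aux_f'_le hb S₂ x hx
  have hzz : f₁' x = f₂' x := by linarith
  have hs : 0 < 2 / σ ^ 2 := by positivity
  have hkey : 0 ≤ 1 / 2 * σ ^ 2 * (ε₁ - ε₂) * f₂' x ^ 2 - ϱ * W x := by
    by_contra hh
    have := mul_neg_of_pos_of_neg hs (not_le.1 hh)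
    rw [hzz] at hE1
    unfold Hfun at hE1 hE2
    simp only [hW] at this
    have hW'' : f₁'' x - f₂'' x ≤ 0 := hW''
    nlinarith
  intro y hy
  refine (hmax y hy).trans ?_
  rw [div_mul_eq_mul_div, le_div_iff₀ (by positivity)]
  have hsq : f₂' x ^ 2 ≤ r ^ 2 := pow_le_pow_left₀ hz0 hzr 2
  have h5 : (ε₁ - ε₂) * f₂' x ^ 2 ≤ |ε₁ - ε₂| * r ^ 2 :=
    mul_le_mul (le_abs_self _) hsq (sq_nonneg _) (abs_nonneg _)
  have h6 := mul_le_mul_of_nonneg_left h5 (sq_nonneg σ)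
  nlinarith

lemma aux_f''_bound (hb : 0 < b) (hσ : 0 < σ) (hϱ : 0 < ϱ) (hr : 0 < r) (hε : 0 ≤ ε)
    (hc : ContinuousOn h (Icc 0 b))
    (hconv : ConvexOn ℝ (Icc (0:ℝ) b) h)
    (hmono : StrictMonoOn h (Icc (0:ℝ) b)) (h0 : h 0 = 0)
    (S : IsHJBSolution b σ ϱ r m ε h f f' f'') {M F : ℝ} (hM : ε ≤ M)
    (hF : ∀ x ∈ Icc 0 b, |f x| ≤ F) :
    ∀ x ∈ Icc 0 b, |f'' x| ≤
      2 / σ ^ 2 * (|m| * r + 1 / 2 * σ ^ 2 * M * r ^ 2 + ϱ * F + h b) := by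
  have key : ∀ x ∈ Icc 0 b, 0 ≤
      2 / σ ^ 2 * (|m| * r + 1 / 2 * σ ^ 2 * M * r ^ 2 + ϱ * F + h b) - |f'' x| := by
    apply aux_closed hb (continuousOn_const.sub S.2.2.1.abs)
    intro x hxO
    show 0 ≤ 2 / σ ^ 2 * (|m| * r + 1 / 2 * σ ^ 2 * M * r ^ 2 + ϱ * F + h b) - |f'' x|
    have hx := Ioo_subset_Icc_self hxO
    have hs : 0 < 2 / σ ^ 2 := by positivity
    have hF0 : 0 ≤ F := (abs_nonneg _).trans (hF x hx)
    have hhx : 0 ≤ h x := by rw [← h0]; exact hmono.monotoneOn ⟨le_rfl, hb.le⟩ hx hx.1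
    have hhb : h x ≤ h b := hmono.monotoneOn hx ⟨hb.le, le_rfl⟩ hx.2
    have hM0 : 0 ≤ M := hε.trans hM
    rcases (aux_f'_le hb S x hx).lt_or_eq with hlt | heq
    · have hE := aux_E_zero_lt hb hσ hϱ hr hε hc hconv hmono h0 S hx hlt
      have hE' : f'' x = - Hfun σ ϱ m ε h x (f x) (f' x) := by linarith
      rw [hE', abs_neg, sub_nonneg, Hfun, abs_mul, abs_of_pos hs]
      apply mul_le_mul_of_nonneg_left _ hs.le
      have hz0 := aux_f'_nonneg hb S x hx
      have hsq : f' x ^ 2 ≤ r ^ 2 := pow_le_pow_left₀ hz0 hlt.le 2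
      have k1 : |m * f' x| ≤ |m| * r := by
        rw [abs_mul, abs_of_nonneg hz0]; exact mul_le_mul_of_nonneg_left hlt.le (abs_nonneg _)
      have k2 : 1 / 2 * σ ^ 2 * ε * f' x ^ 2 ≤ 1 / 2 * σ ^ 2 * M * r ^ 2 := by gcongr
      have k2' : 0 ≤ 1 / 2 * σ ^ 2 * ε * f' x ^ 2 := by positivity
      have k3 : |ϱ * f x| ≤ ϱ * F := by
        rw [abs_mul, abs_of_pos hϱ]; exact mul_le_mul_of_nonneg_left (hF x hx) hϱ.le
      rw [abs_le] at k1 k3 ⊢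
      constructor <;> linarith [k1.1, k1.2, k3.1, k3.2]
    · have : f'' x = 0 := by
        apply IsLocalMax.hasDerivAt_eq_zero _ (aux_hasDeriv S hxO).2
        filter_upwards [Icc_mem_nhds hxO.1 hxO.2] with y hy
        rw [heq]; exact aux_f'_le hb S y hy
      have hhb0 : 0 ≤ h b := hhx.trans hhb
      rw [this, abs_zero, sub_zero]
      positivity
  intro x hx
  linarith [key x hx]

/-- interpolation inequality -/
lemma aux_interp {b : ℝ} {W W' W'' : ℝ → ℝ}
    (h1 : ∀ x ∈ Icc (0:ℝ) b, HasDerivWithinAt W (W' x) (Icc (0:ℝ) b) x)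
    (h2 : ∀ x ∈ Icc (0:ℝ) b, HasDerivWithinAt W' (W'' x) (Icc (0:ℝ) b) x)
    {A C t : ℝ} (hA : ∀ x ∈ Icc 0 b, |W x| ≤ A) (hC : ∀ x ∈ Icc 0 b, |W'' x| ≤ C)
    (ht : 0 < t) (htb : t ≤ b / 2) :
    ∀ x ∈ Icc 0 b, |W' x| ≤ 2 * A / t + C * t := by
  have c1 : ContinuousOn W (Icc 0 b) := fun x hx => (h1 x hx).continuousWithinAt
  have d1 : ∀ x ∈ Ioo 0 b, HasDerivAt W (W' x) x := fun x hx =>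
    (h1 x (Ioo_subset_Icc_self hx)).hasDerivAt (Icc_mem_nhds hx.1 hx.2)
  have hL : ∀ x ∈ Icc 0 b, ∀ y ∈ Icc 0 b, |W' y - W' x| ≤ C * |y - x| := by
    intro x hx y hy
    exact (convex_Icc 0 b).norm_image_sub_le_of_norm_hasDerivWithin_le h2 hC hx hy
  have gen : ∀ u v x, 0 ≤ u → v ≤ b → v - u = t → u ≤ x → x ≤ v → |W' x| ≤ 2 * A / t + C * t := by
    intro u v x hu hv huv hux hxv
    have huv' : u < v := by linarith
    obtain ⟨ξ, hξ, he⟩ := exists_hasDerivAt_eq_slope W W' huv'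
      (c1.mono (Icc_subset_Icc hu hv))
      (fun z hz => d1 z ⟨hu.trans_lt hz.1, hz.2.trans_le hv⟩)
    have hxI : x ∈ Icc 0 b := ⟨hu.trans hux, hxv.trans hv⟩
    have hC0 : 0 ≤ C := (abs_nonneg _).trans (hC x hxI)
    have k1 := hL ξ ⟨(hu.trans_lt hξ.1).le, (hξ.2.trans_le hv).le⟩ x hxI
    have k2 : |x - ξ| ≤ t := by
      rw [abs_le]; constructor <;> linarith [hξ.1, hξ.2]
    have k3 : |W' ξ| ≤ 2 * A / t := by
      rw [he, huv, abs_div, abs_of_pos ht]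
      apply div_le_div_of_nonneg_right _ ht.le
      have := abs_sub (W v) (W u)
      have a1 := hA v ⟨hu.trans huv'.le, hv⟩
      have a2 := hA u ⟨hu, huv'.le.trans hv⟩
      linarith
    have k4 := mul_le_mul_of_nonneg_left k2 hC0
    have k5 : |W' x| ≤ |W' ξ| + |W' x - W' ξ| := by
      have := abs_add_le (W' ξ) (W' x - W' ξ)
      simpa using this
    linarith
  intro x hx
  rcases le_total x (b / 2) with hh | hh
  · exact gen x (x + t) x hx.1 (by linarith) (by ring) le_rfl (by linarith)
  · exact gen (x - t) x x (by linarith) hx.2 (by ring) (by linarith) le_rfl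

lemma aux_Hdiff (hσ : 0 < σ) (hϱ : 0 < ϱ) (hε : 0 ≤ ε) {e x y₁ y₂ z₁ z₂ η : ℝ}
    (he : |ε - e| ≤ η) (hy : |y₁ - y₂| ≤ η) (hz : |z₁ - z₂| ≤ η)
    (h1 : 0 ≤ z₁) (h1' : z₁ ≤ r) (h2 : 0 ≤ z₂) (h2' : z₂ ≤ r) :
    |Hfun σ ϱ m ε h x y₁ z₁ - Hfun σ ϱ m e h x y₂ z₂| ≤
      (2 / σ ^ 2 * (|m| + 1 / 2 * σ ^ 2 * (ε * (2 * r) + r ^ 2) + ϱ)) * η := by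
  have hs : 0 < 2 / σ ^ 2 := by positivity
  have hr : 0 ≤ r := h1.trans h1'
  have k : Hfun σ ϱ m ε h x y₁ z₁ - Hfun σ ϱ m e h x y₂ z₂ =
      2 / σ ^ 2 * (m * (z₁ - z₂) + 1 / 2 * σ ^ 2 * (ε * ((z₁ + z₂) * (z₁ - z₂)) + (ε - e) * z₂ ^ 2)
        - ϱ * (y₁ - y₂)) := by
    unfold Hfun; ring
  have hη : 0 ≤ η := (abs_nonneg _).trans hy
  rw [k, abs_mul, abs_of_pos hs,
    mul_assoc (2 / σ ^ 2) (|m| + 1 / 2 * σ ^ 2 * (ε * (2 * r) + r ^ 2) + ϱ) η]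
  apply mul_le_mul_of_nonneg_left _ hs.le
  have k1 : |m * (z₁ - z₂)| ≤ |m| * η := by
    rw [abs_mul]; gcongr
  have k2 : |ϱ * (y₁ - y₂)| ≤ ϱ * η := by
    rw [abs_mul, abs_of_pos hϱ]; gcongr
  have k3 : |ε * ((z₁ + z₂) * (z₁ - z₂))| ≤ ε * (2 * r * η) := by
    rw [abs_mul, abs_mul, abs_of_nonneg hε, abs_of_nonneg (add_nonneg h1 h2)]
    gcongr
    linarith
  have k4 : |(ε - e) * z₂ ^ 2| ≤ η * r ^ 2 := by
    rw [abs_mul, abs_of_nonneg (sq_nonneg z₂)]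
    gcongr
  have k5 : |1 / 2 * σ ^ 2 * (ε * ((z₁ + z₂) * (z₁ - z₂)) + (ε - e) * z₂ ^ 2)| ≤
      1 / 2 * σ ^ 2 * (ε * (2 * r * η) + η * r ^ 2) := by
    rw [abs_mul, abs_of_nonneg (show 0 ≤ 1 / 2 * σ ^ 2 by positivity)]
    gcongr
    exact (abs_add_le _ _).trans (add_le_add k3 k4)
  have k6 : (|m| + 1 / 2 * σ ^ 2 * (ε * (2 * r) + r ^ 2) + ϱ) * η =
      |m| * η + 1 / 2 * σ ^ 2 * (ε * (2 * r * η) + η * r ^ 2) + ϱ * η := by ring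
  rw [k6]
  rw [abs_le] at k1 k2 k5 ⊢
  constructor <;> linarith [k1.1, k1.2, k2.1, k2.2, k5.1, k5.2]

end aux

set_option maxHeartbeats 1000000 in
/-- For every ε ∈ [0,∞):
β_ε ≤ liminf_{δ→0} β_{ε+δ} ≤ limsup_{δ→0} β̂_{ε+δ} ≤ β̂_ε (δ → 0 through values with
ε + δ ≥ 0). Consequently, if β_ε = β̂_ε then
lim_{δ→0} β_{ε+δ} = lim_{δ→0} β̂_{ε+δ} = β̂_ε. -/
theorem stmt19 (b σ ϱ r m : ℝ) (hb : 0 < b) (hσ : 0 < σ) (hϱ : 0 < ϱ) (hr : 0 < r)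
    (h : ℝ → ℝ)
    (hLip : ∃ K : NNReal, LipschitzOnWith K h (Icc (0:ℝ) b))
    (hconv : ConvexOn ℝ (Icc (0:ℝ) b) h)
    (hmono : StrictMonoOn h (Icc (0:ℝ) b)) (h0 : h 0 = 0)
    (f f' f'' : ℝ → ℝ → ℝ)
    (hsol : ∀ ε : ℝ, 0 ≤ ε → IsHJBSolution b σ ϱ r m ε h (f ε) (f' ε) (f'' ε))
    (β βhat : ℝ → ℝ)
    (hβ : ∀ ε : ℝ, β ε = sInf {x : ℝ | x ∈ Ioc (0:ℝ) b ∧ f' ε x = r})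
    (hβhat : ∀ ε : ℝ, βhat ε = sSup {x : ℝ | x ∈ Ioc (0:ℝ) b ∧
      ∀ y ∈ Icc (0:ℝ) x, f'' ε y + Hfun σ ϱ m ε h y (f ε y) (f' ε y) = 0}) :
    ∀ ε : ℝ, 0 ≤ ε →
      (β ε ≤ liminf (fun δ => β (ε + δ)) (𝓝[Ici (-ε)] 0) ∧
        liminf (fun δ => β (ε + δ)) (𝓝[Ici (-ε)] 0) ≤
          limsup (fun δ => βhat (ε + δ)) (𝓝[Ici (-ε)] 0) ∧
        limsup (fun δ => βhat (ε + δ)) (𝓝[Ici (-ε)] 0) ≤ βhat ε) ∧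
      (β ε = βhat ε →
        Tendsto (fun δ => β (ε + δ)) (𝓝[Ici (-ε)] 0) (𝓝 (βhat ε)) ∧
        Tendsto (fun δ => βhat (ε + δ)) (𝓝[Ici (-ε)] 0) (𝓝 (βhat ε))) := by
  intro ε hε
  obtain ⟨K₀, hK₀⟩ := hLip
  have hc : ContinuousOn h (Icc 0 b) := hK₀.continuousOn
  -- elementary bounds
  have hβ0 : ∀ e, 0 ≤ β e := by
    intro e; rw [hβ]; exact Real.sInf_nonneg (fun x hx => hx.1.1.le)
  have hβb : ∀ e, 0 ≤ e → β e ≤ b := by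
    intro e he; rw [hβ]
    exact csInf_le ⟨0, fun x hx => hx.1.1.le⟩ ⟨⟨hb, le_rfl⟩, (hsol e he).2.2.2.2.2⟩
  have hhat0 : ∀ e, 0 ≤ βhat e := by
    intro e; rw [hβhat]; exact Real.sSup_nonneg (fun x hx => hx.1.1.le)
  have hhatb : ∀ e, βhat e ≤ b := by
    intro e; rw [hβhat]; exact Real.sSup_le (fun x hx => hx.1.2) hb.le
  have hltβ : ∀ e, 0 ≤ e → ∀ y, 0 ≤ y → y < β e → f' e y < r := by
    intro e he y hy hyβ
    rcases hy.lt_or_eq with hy0 | hy0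
    · have hyb : y ≤ b := hyβ.le.trans (hβb e he)
      rcases (aux_f'_le hb (hsol e he) y ⟨hy, hyb⟩).lt_or_eq with h1 | h1
      · exact h1
      · rw [hβ] at hyβ
        have h2 : sInf {x : ℝ | x ∈ Ioc (0:ℝ) b ∧ f' e x = r} ≤ y :=
          csInf_le ⟨0, fun x hx => hx.1.1.le⟩ ⟨⟨hy0, hyb⟩, h1⟩
        exact absurd h2 (not_le.2 hyβ)
    · rw [← hy0, (hsol e he).2.2.2.2.1]; exact hr
  have hmem : ∀ e, 0 ≤ e → β e ∈ {x : ℝ | x ∈ Ioc (0:ℝ) b ∧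
      ∀ y ∈ Icc (0:ℝ) x, f'' e y + Hfun σ ϱ m e h y (f e y) (f' e y) = 0} := by
    intro e he
    have S := hsol e he
    have hpos : 0 < β e := by
      obtain ⟨d, hd0, hdb, hd⟩ := aux_right (aux_contf' S) le_rfl hb (c := r)
        (by rw [S.2.2.2.2.1]; exact hr)
      refine hd0.trans_le ?_
      rw [hβ]
      refine le_csInf ⟨b, ⟨hb, le_rfl⟩, S.2.2.2.2.2⟩ ?_
      intro x hx
      by_contra hh
      exact absurd hx.2 (hd x ⟨hx.1.1.le, (not_le.1 hh).le⟩).ne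
    refine ⟨⟨hpos, hβb e he⟩, ?_⟩
    intro y hy
    apply aux_eq_closure (aux_contE hc S) (s := Ico 0 (β e))
    · intro z hz; exact ⟨hz.1, hz.2.le.trans (hβb e he)⟩
    · intro z hz
      exact aux_E_zero_lt hb hσ hϱ hr he hc hconv hmono h0 S ⟨hz.1, hz.2.le.trans (hβb e he)⟩
        (hltβ e he z hz.1 hz.2)
    · rw [closure_Ico hpos.ne]; exact hy
  have hle : ∀ e, 0 ≤ e → β e ≤ βhat e := by
    intro e he
    rw [hβhat e]
    exact le_csSup ⟨b, fun x hx => hx.1.2⟩ (hmem e he)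
  have Sε := hsol ε hε
  -- uniform convergence
  have hU : ∀ η > 0, ∀ᶠ δ in 𝓝[Ici (-ε)] (0:ℝ), 0 ≤ ε + δ ∧ |ε - (ε + δ)| ≤ η ∧
      ∀ x ∈ Icc 0 b, |f ε x - f (ε + δ) x| ≤ η ∧ |f' ε x - f' (ε + δ) x| ≤ η := by
    intro η hη
    obtain ⟨F₀, hF₀⟩ := isCompact_Icc.exists_bound_of_continuousOn (aux_contf Sε)
    have hF₀' : ∀ x ∈ Icc 0 b, |f ε x| ≤ F₀ := hF₀
    set K := σ ^ 2 * r ^ 2 / (2 * ϱ) with hK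
    have hK0 : 0 ≤ K := by positivity
    set B := 2 / σ ^ 2 * (|m| * r + 1 / 2 * σ ^ 2 * (ε + 1) * r ^ 2 + ϱ * (F₀ + K) + h b) with hB
    have hBε := aux_f''_bound hb hσ hϱ hr hε hc hconv hmono h0 Sε (M := ε + 1) (F := F₀ + K)
      (by linarith) (fun x hx => (hF₀' x hx).trans (by linarith))
    have hB0 : 0 ≤ B := (abs_nonneg _).trans (hBε 0 ⟨le_rfl, hb.le⟩)
    set t := min (b / 2) (η / (2 * (2 * B + 1))) with ht
    have ht0 : 0 < t := lt_min (by linarith) (by positivity)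
    have htη : 2 * B * t ≤ η / 2 := by
      have h1 : t ≤ η / (2 * (2 * B + 1)) := min_le_right _ _
      rw [le_div_iff₀ (by positivity)] at h1
      nlinarith
    set q := min (min 1 η) (min (η / (K + 1)) (t * η / (4 * (K + 1)))) with hq
    have hq0 : 0 < q := by
      apply lt_min (lt_min one_pos hη) (lt_min _ _) <;> positivity
    have hball : ∀ᶠ δ in 𝓝[Ici (-ε)] (0:ℝ), |δ| < q := by
      apply mem_nhdsWithin_of_mem_nhds
      filter_upwards [Metric.ball_mem_nhds (0:ℝ) hq0] with δ hδ
      simpa [Real.dist_eq] using hδ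
    filter_upwards [hball, self_mem_nhdsWithin] with δ hδ hδI
    have he : 0 ≤ ε + δ := by
      have : -ε ≤ δ := hδI
      linarith
    have hd1 : |δ| < 1 := hδ.trans_le ((min_le_left _ _).trans (min_le_left _ _))
    have hd2 : |δ| < η := hδ.trans_le ((min_le_left _ _).trans (min_le_right _ _))
    have hd3 : |δ| < η / (K + 1) := hδ.trans_le ((min_le_right _ _).trans (min_le_left _ _))
    have hd4 : |δ| < t * η / (4 * (K + 1)) :=
      hδ.trans_le ((min_le_right _ _).trans (min_le_right _ _))
    rw [lt_div_iff₀ (by positivity)] at hd3 hd4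
    have hab : |ε - (ε + δ)| = |δ| := by
      rw [show ε - (ε + δ) = -δ by ring, abs_neg]
    have hab' : |ε + δ - ε| = |δ| := by
      rw [show ε + δ - ε = δ by ring]
    have S := hsol (ε + δ) he
    have hδ0 := abs_nonneg δ
    have hA : ∀ x ∈ Icc 0 b, |f ε x - f (ε + δ) x| ≤ K * |δ| := by
      intro x hx
      have h1 := aux_comp hb hσ hϱ hr he hc hconv hmono h0 Sε S x hx
      have h2 := aux_comp hb hσ hϱ hr hε hc hconv hmono h0 S Sε x hx
      rw [hab] at h1
      rw [hab'] at h2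
      rw [abs_le]; constructor <;> linarith
    have hKδ : K * |δ| ≤ K := by nlinarith
    have hBδ := aux_f''_bound hb hσ hϱ hr he hc hconv hmono h0 S (M := ε + 1) (F := F₀ + K)
      (by linarith [le_abs_self δ]) (by
        intro x hx
        have h1 := hA x hx
        have h2 := hF₀' x hx
        rw [abs_le] at h1 h2 ⊢
        constructor <;> linarith [h1.1, h1.2, h2.1, h2.2])
    have hint := aux_interp (W := fun x => f ε x - f (ε + δ) x)
      (W' := fun x => f' ε x - f' (ε + δ) x) (W'' := fun x => f'' ε x - f'' (ε + δ) x)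
      (fun x hx => (Sε.1 x hx).sub (S.1 x hx)) (fun x hx => (Sε.2.1 x hx).sub (S.2.1 x hx))
      (A := K * |δ|) (C := 2 * B) (t := t) hA (by
        intro x hx
        have h1 := hBε x hx
        have h2 := hBδ x hx
        rw [abs_le] at h1 h2 ⊢
        constructor <;> linarith [h1.1, h1.2, h2.1, h2.2]) ht0 (min_le_left _ _)
    refine ⟨he, by rw [hab]; exact hd2.le, fun x hx => ⟨?_, ?_⟩⟩
    · refine (hA x hx).trans ?_
      nlinarith
    · refine (hint x hx).trans ?_
      have h3 : 2 * (K * |δ|) / t ≤ η / 2 := by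
        rw [div_le_iff₀ ht0]
        nlinarith
      linarith
  -- lower semicontinuity of β
  have hLow : ∀ a < β ε, ∀ᶠ δ in 𝓝[Ici (-ε)] (0:ℝ), a ≤ β (ε + δ) := by
    intro a ha
    rcases le_or_gt a 0 with ha0 | ha0
    · exact Eventually.of_forall (fun δ => ha0.trans (hβ0 _))
    have hsub : Icc 0 a ⊆ Icc 0 b := Icc_subset_Icc le_rfl (ha.le.trans (hβb ε hε))
    obtain ⟨x₀, hx₀, hmax⟩ := isCompact_Icc.exists_isMaxOn (⟨0, le_rfl, ha0.le⟩ : (Icc 0 a).Nonempty)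
      ((aux_contf' Sε).mono hsub)
    have hlt : f' ε x₀ < r := hltβ ε hε x₀ hx₀.1 (hx₀.2.trans_lt ha)
    filter_upwards [hU ((r - f' ε x₀) / 2) (by linarith)] with δ hδ
    obtain ⟨he, -, hδ⟩ := hδ
    rw [hβ]
    refine le_csInf ⟨b, ⟨hb, le_rfl⟩, (hsol _ he).2.2.2.2.2⟩ ?_
    intro x hx
    by_contra hh
    have hxa : x ∈ Icc 0 a := ⟨hx.1.1.le, (not_le.1 hh).le⟩
    have h1 := (hδ x (hsub hxa)).2
    have h2 : f' ε x ≤ f' ε x₀ := hmax hxa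
    rw [hx.2] at h1
    have := (abs_le.1 h1).1
    linarith
  -- upper semicontinuity of βhat
  have hUp : ∀ a, βhat ε < a → ∀ᶠ δ in 𝓝[Ici (-ε)] (0:ℝ), βhat (ε + δ) ≤ a := by
    intro a ha
    rcases le_or_gt b a with hab | hab
    · exact Eventually.of_forall (fun δ => (hhatb _).trans hab)
    have hb0 := hhat0 ε
    set a' := (βhat ε + a) / 2 with ha'
    have ha'1 : βhat ε < a' := by linarith
    have ha'2 : a' < a := by linarith
    have hex : ∃ y ∈ Icc 0 a', f'' ε y + Hfun σ ϱ m ε h y (f ε y) (f' ε y) ≠ 0 := by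
      by_contra hh
      push Not at hh
      have : a' ≤ βhat ε := by
        rw [hβhat]
        exact le_csSup ⟨b, fun x hx => hx.1.2⟩ ⟨⟨by linarith, by linarith⟩, hh⟩
      linarith
    obtain ⟨y, hy, hne⟩ := hex
    have hyb : y < b := by linarith [hy.2]
    have hEpos : 0 < f'' ε y + Hfun σ ϱ m ε h y (f ε y) (f' ε y) :=
      lt_of_le_of_ne (aux_E_nonneg hb hc Sε y ⟨hy.1, hyb.le⟩) hne.symm
    set c := (f'' ε y + Hfun σ ϱ m ε h y (f ε y) (f' ε y)) / 2 with hcdef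
    have hc0 : 0 < c := by linarith
    obtain ⟨d₀, hyd₀, hd₀b, hd₀⟩ := aux_right (aux_contE hc Sε).neg hy.1 hyb (c := -c)
      (show -(f'' ε y + Hfun σ ϱ m ε h y (f ε y) (f' ε y)) < -c by linarith)
    set d := min d₀ a with hd
    have hyd : y < d := lt_min hyd₀ (by linarith [hy.2])
    have hda : d ≤ a := min_le_right _ _
    have hdd : d ≤ d₀ := min_le_left _ _
    have hdb : d < b := by linarith
    set L := 2 / σ ^ 2 * (|m| + 1 / 2 * σ ^ 2 * (ε * (2 * r) + r ^ 2) + ϱ) with hL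
    have hL0 : 0 ≤ L := by positivity
    set η := min (c / (2 * (L + 1))) (c * (d - y) / 8) with hη
    have hdy : 0 < d - y := sub_pos.2 hyd
    have hη0 : 0 < η := by apply lt_min <;> positivity
    have hη1 : L * η ≤ c / 2 := by
      have h1 : η ≤ c / (2 * (L + 1)) := min_le_left _ _
      rw [le_div_iff₀ (by positivity)] at h1
      nlinarith
    have hη2 : η ≤ c * (d - y) / 8 := min_le_right _ _
    filter_upwards [hU η hη0] with δ hδ
    obtain ⟨he, hδη, hδ⟩ := hδ
    have S := hsol _ he
    by_contra hh
    rw [not_le, hβhat] at hh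
    obtain ⟨x, hx, hax⟩ := exists_lt_of_lt_csSup ⟨_, hmem _ he⟩ hh
    obtain ⟨ξ, hξ, hes⟩ := exists_hasDerivAt_eq_slope (fun x => f' ε x - f' (ε + δ) x)
      (fun x => f'' ε x - f'' (ε + δ) x) hyd
      (((aux_contf' Sε).sub (aux_contf' S)).mono (Icc_subset_Icc hy.1 hdb.le))
      (fun z hz => (aux_hasDeriv Sε ⟨hy.1.trans_lt hz.1, hz.2.trans hdb⟩).2.sub
        (aux_hasDeriv S ⟨hy.1.trans_lt hz.1, hz.2.trans hdb⟩).2)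
    have hξI : ξ ∈ Icc 0 b := ⟨(hy.1.trans_lt hξ.1).le, (hξ.2.trans hdb).le⟩
    have k1 : -(f'' ε ξ + Hfun σ ϱ m ε h ξ (f ε ξ) (f' ε ξ)) < -c :=
      hd₀ ξ ⟨hξ.1.le, hξ.2.le.trans hdd⟩
    have k2 := hx.2 ξ ⟨hξI.1, by linarith [hξ.2]⟩
    have k3 := aux_Hdiff (m := m) (h := h) (x := ξ) hσ hϱ hε hδη (hδ ξ hξI).1 (hδ ξ hξI).2
      (aux_f'_nonneg hb Sε ξ hξI) (aux_f'_le hb Sε ξ hξI)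
      (aux_f'_nonneg hb S ξ hξI) (aux_f'_le hb S ξ hξI)
    rw [← hL] at k3
    have k4 := (abs_le.1 k3).2
    have k5 : c / 2 < f'' ε ξ - f'' (ε + δ) ξ := by linarith
    have k6 : f'' ε ξ - f'' (ε + δ) ξ =
      ((f' ε d - f' (ε + δ) d) - (f' ε y - f' (ε + δ) y)) / (d - y) := hes
    rw [k6, lt_div_iff₀ hdy] at k5
    have k7 := (abs_le.1 (hδ d ⟨hy.1.trans hyd.le, hdb.le⟩).2).2
    have k8 := (abs_le.1 (hδ y ⟨hy.1, hyb.le⟩).2).1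
    have k9 : 0 < c * (d - y) := mul_pos hc0 hdy
    have k10 : c / 2 * (d - y) = c * (d - y) / 2 := by ring
    rw [k10] at k5
    linarith
  haveI hNB : (𝓝[Ici (-ε)] (0:ℝ)).NeBot :=
    mem_closure_iff_nhdsWithin_neBot.1 (subset_closure (by simpa using hε))
  have hev : ∀ᶠ δ in 𝓝[Ici (-ε)] (0:ℝ), 0 ≤ ε + δ := (hU 1 one_pos).mono (fun δ hδ => hδ.1)
  have bb1 : IsBoundedUnder (· ≤ ·) (𝓝[Ici (-ε)] (0:ℝ)) (fun δ => β (ε + δ)) :=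
    ⟨b, by rw [eventually_map]; exact hev.mono (fun δ hδ => hβb _ hδ)⟩
  have bb2 : IsBoundedUnder (· ≥ ·) (𝓝[Ici (-ε)] (0:ℝ)) (fun δ => β (ε + δ)) :=
    ⟨0, by rw [eventually_map]; exact Eventually.of_forall (fun δ => hβ0 _)⟩
  have bb3 : IsBoundedUnder (· ≤ ·) (𝓝[Ici (-ε)] (0:ℝ)) (fun δ => βhat (ε + δ)) :=
    ⟨b, by rw [eventually_map]; exact Eventually.of_forall (fun δ => hhatb _)⟩
  have bb4 : IsBoundedUnder (· ≥ ·) (𝓝[Ici (-ε)] (0:ℝ)) (fun δ => βhat (ε + δ)) :=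
    ⟨0, by rw [eventually_map]; exact Eventually.of_forall (fun δ => hhat0 _)⟩
  have hev' : ∀ᶠ δ in 𝓝[Ici (-ε)] (0:ℝ), β (ε + δ) ≤ βhat (ε + δ) :=
    hev.mono (fun δ hδ => hle _ hδ)
  refine ⟨⟨?_, ?_, ?_⟩, ?_⟩
  · apply le_of_forall_lt_imp_le_of_dense
    intro a ha
    exact le_liminf_of_le bb1.isCoboundedUnder_ge (hLow a ha)
  · exact (liminf_le_liminf hev' bb2 bb3.isCoboundedUnder_ge).trans (liminf_le_limsup bb3 bb4)
  · apply le_of_forall_gt_imp_ge_of_dense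
    intro a ha
    exact limsup_le_of_le bb4.isCoboundedUnder_le (hUp a ha)
  · intro heq
    constructor
    · rw [tendsto_order]
      constructor
      · intro a ha
        obtain ⟨a', h1, h2⟩ := exists_between ha
        exact (hLow a' (by rw [heq]; exact h2)).mono (fun δ hδ => h1.trans_le hδ)
      · intro a ha
        obtain ⟨a', h1, h2⟩ := exists_between ha
        filter_upwards [hUp a' h1, hev'] with δ k1 k2
        linarith
    · rw [tendsto_order]
      constructor
      · intro a ha
        obtain ⟨a', h1, h2⟩ := exists_between ha
        filter_upwards [hLow a' (by rw [heq]; exact h2), hev'] with δ k1 k2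
        linarith
      · intro a ha
        obtain ⟨a', h1, h2⟩ := exists_between ha
        filter_upwards [hUp a' h1] with δ k1
        linarith
end
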